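/- Let p ∈ (1, ∞), N ≥ 1, H ≥ 1. For every Φ-function Φ satisfying Φ ∈ (aInc)_p(∞) ∩ (aDec)(∞), there exist positive constants c, C, C₁, C₂, depending only on Φ and p, such that for every N-dimensional subspace X_N ⊂ C(Ω) with X_N ∈ NI_{2,∞}(H) and every m ≥ C·Φ(c·H^{2/min{p,2}})·(log 2N)²·log 2H², there is a set x = {x₁, …, x_m} ⊂ Ω of cardinality m such that C₁‖f‖_Φ ≤ ‖f‖_{Φ,x} ≤ C₂‖f‖_Φ for all f ∈ X_N. -/

import Mathlib

open MeasureTheory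

noncomputable section

/-- The sup-norm (uniform norm) `‖f‖_∞ = sup_{x ∈ Ω} |f x|` of a real-valued function. -/
def supNorm {Ω : Type*} (f : Ω → ℝ) : ℝ := ⨆ x, |f x|

/-- The Luxemburg functional `‖f‖_Φ = inf {λ > 0 : ∫ Φ(|f|/λ) dμ ≤ 1}`. -/
def luxNorm {Ω : Type*} [MeasurableSpace Ω] (μ : Measure Ω) (Φ : ℝ → ℝ) (f : Ω → ℝ) : ℝ :=
  sInf {lam : ℝ | 0 < lam ∧ ∫ x, Φ (|f x| / lam) ∂μ ≤ 1}

/-- The discrete Luxemburg functional `‖f‖_{Φ,x}` with respect to the uniform discrete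
probability measure `(1/m) ∑_{j=1}^m δ_{x_j}`. -/
def discLuxNorm {Ω : Type*} (Φ : ℝ → ℝ) {m : ℕ} (x : Fin m → Ω) (f : Ω → ℝ) : ℝ :=
  sInf {lam : ℝ | 0 < lam ∧ (∑ j, Φ (|f (x j)| / lam)) / (m : ℝ) ≤ 1}

/-- The weighted discrete Luxemburg functional `‖f‖_{Φ,x,λ}` with respect to the discrete
probability measure `∑_{j=1}^m λ_j δ_{x_j}`. -/
def wDiscLuxNorm {Ω : Type*} (Φ : ℝ → ℝ) {m : ℕ} (x : Fin m → Ω) (w : Fin m → ℝ)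
    (f : Ω → ℝ) : ℝ :=
  sInf {lam : ℝ | 0 < lam ∧ (∑ j, w j * Φ (|f (x j)| / lam)) ≤ 1}

/-- `Φ : [0,∞) → [0,∞)` is a Φ-prefunction: increasing, `Φ(0) = 0`, `Φ(0+) = 0`,
`Φ(∞) = ∞` (stated for a function on `ℝ`, with the relevant conditions on `[0,∞)`). -/
structure IsPhiPrefun (Φ : ℝ → ℝ) : Prop where
  mono : MonotoneOn Φ (Set.Ici 0)
  map_zero : Φ 0 = 0
  nonneg : ∀ t : ℝ, 0 ≤ t → 0 ≤ Φ t
  tendsto_zero : Filter.Tendsto Φ (nhdsWithin 0 (Set.Ioi 0)) (nhds 0)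
  tendsto_atTop : Filter.Tendsto Φ Filter.atTop Filter.atTop

/-- `Φ ∈ (aInc)_p` with constant `a`: `t ↦ Φ(t) t^{-p}` is almost increasing on `(0,∞)`. -/
def AIncP (Φ : ℝ → ℝ) (p a : ℝ) : Prop :=
  ∀ s t : ℝ, 0 < s → s < t → Φ s / s ^ p ≤ a * (Φ t / t ^ p)

/-- `Φ ∈ (Inc)_p` : `t ↦ Φ(t) t^{-p}` is increasing on `(0,∞)`. -/
def IncP (Φ : ℝ → ℝ) (p : ℝ) : Prop :=
  ∀ s t : ℝ, 0 < s → s < t → Φ s / s ^ p ≤ Φ t / t ^ p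

/-- `Φ ∈ (Dec)_q` : `t ↦ Φ(t) t^{-q}` is decreasing on `(0,∞)`. -/
def DecQ (Φ : ℝ → ℝ) (q : ℝ) : Prop :=
  ∀ s t : ℝ, 0 < s → s < t → Φ t / t ^ q ≤ Φ s / s ^ q

/-- `Φ ∈ (aDec)_q` with constant `b`: `t ↦ Φ(t) t^{-q}` is almost decreasing on `(0,∞)`. -/
def ADecQ (Φ : ℝ → ℝ) (q b : ℝ) : Prop :=
  ∀ s t : ℝ, 0 < s → s < t → Φ t / t ^ q ≤ b * (Φ s / s ^ q)

/-- `t ↦ Φ(t) t^{-p}` is almost increasing with constant `a` on `(t_*, ∞)`. -/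
def AIncPOn (Φ : ℝ → ℝ) (p a tstar : ℝ) : Prop :=
  ∀ s t : ℝ, tstar < s → s < t → Φ s / s ^ p ≤ a * (Φ t / t ^ p)

/-- `t ↦ Φ(t) t^{-q}` is almost decreasing with constant `b` on `(t_*, ∞)`. -/
def ADecQOn (Φ : ℝ → ℝ) (q b tstar : ℝ) : Prop :=
  ∀ s t : ℝ, tstar < s → s < t → Φ t / t ^ q ≤ b * (Φ s / s ^ q)

/-- Entropy numbers `e_n(F, d)` of a set `F` with respect to a distance-like function `dd`:
the infimum of `ε > 0` such that `F` can be covered by `2^{2^n}` (one, for `n = 0`)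
`ε`-balls centered in `F`. -/
def entropyNumD {X : Type*} (dd : X → X → ℝ) (F : Set X) (n : ℕ) : ℝ :=
  sInf {ε : ℝ | 0 < ε ∧ ∃ T : Finset X, ↑T ⊆ F ∧
    T.card ≤ (if n = 0 then 1 else 2 ^ 2 ^ n) ∧ ∀ f ∈ F, ∃ g ∈ T, dd f g < ε}

/-- Sampling numbers `ϱ_m(F, ‖·‖)`: recovery by linear methods from samples at `m` points. -/
def sampNum {Ω : Type*} (nrm : (Ω → ℝ) → ℝ) (F : Set (Ω → ℝ)) (m : ℕ) : ℝ :=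
  sInf {r : ℝ | ∃ (x : Fin m → Ω) (T : (Fin m → ℝ) →ₗ[ℝ] (Ω → ℝ)),
    r = ⨆ f ∈ F, nrm (fun y => f y - T (fun j => f (x j)) y)}

/-- Modified sampling numbers `ϱ*_m(F, ‖·‖)`: recovery by arbitrary methods mapping into a
subspace of dimension at most `m`, from samples at `m` points. -/
def sampNumStar {Ω : Type*} (nrm : (Ω → ℝ) → ℝ) (F : Set (Ω → ℝ)) (m : ℕ) : ℝ :=
  sInf {r : ℝ | ∃ (x : Fin m → Ω) (Y : Submodule ℝ (Ω → ℝ)), Module.finrank ℝ Y ≤ m ∧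
    ∃ T : (Fin m → ℝ) → Ω → ℝ, (∀ v, T v ∈ Y) ∧
    r = ⨆ f ∈ F, nrm (fun y => f y - T (fun j => f (x j)) y)}

/-- Kolmogorov width `d_N(F, ‖·‖_∞)` : infimum over `N`-dimensional subspaces of `C(Ω)` of the
worst-case best approximation error in the uniform norm. -/
def kolWidth {Ω : Type*} [TopologicalSpace Ω] (F : Set (Ω → ℝ)) (N : ℕ) : ℝ :=
  sInf {r : ℝ | ∃ X : Submodule ℝ (Ω → ℝ), Module.finrank ℝ X = N ∧
    (∀ u ∈ X, Continuous u) ∧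
    r = ⨆ f ∈ F, sInf ((fun u => supNorm (fun y => f y - u y)) '' (X : Set (Ω → ℝ)))}

end

/-!
Above a large threshold `Φ` is equivalent to a function `Ψ` which grows between the powers
`min p 2` and `q` everywhere; on probability measures this costs only a constant in the Luxemburg
norm. The Nikolskii inequality makes `f ↦ f y` an inner product with a vector of norm at most `H`,
so `X` is the range of a bounded Parseval frame indexed by `Ω`.

A large random sample reproduces the modular `∫ Ψ |f|` on its unit ball. Such a sample can be
halved: split it into pairs and select one point of each pair at random. The deviation is a
Rademacher process, and the increments of `Ψ |f|` are bounded by `Ψ |f|` itself, so chaining needs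
only covering numbers in the uniform norm on the sample. These are bounded by Novikoff's perceptron
argument at the first `log (2N)` scales and by volume at the remaining ones. The errors of
successive halvings form a geometric series dominated by its last term, the one at sample size `m`.
Finally, closeness of the modulars on the unit ball passes to the Luxemburg norms by doubling.
-/

noncomputable section

open Finset
open scoped RealInnerProductSpace

/-! ## Random selections -/

section Signs

variable {ι : Type*} [Fintype ι]

/-- The Rademacher sign encoded by a Boolean. -/
def boolSign (b : Bool) : ℝ := if b then 1 else -1

lemma abs_boolSign (b : Bool) : |boolSign b| = 1 := by
  cases b <;> simp [boolSign]

lemma exists_boolSign_mul_eq_abs (x : ℝ) : ∃ b, boolSign b * x = |x| := by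
  rcases abs_choice x with h | h
  · exact ⟨true, by simp [boolSign, h]⟩
  · exact ⟨false, by simp [boolSign, h]⟩

/-- Selecting from each pair `{(i, true), (i, false)}` the element `(i, e i)`, twice the selected
part of `∑ j, y j` differs from the whole sum by `selectionGap e y`. -/
def selectionGap (e : ι → Bool) (y : ι × Bool → ℝ) : ℝ :=
  ∑ i, boolSign (e i) * (y (i, true) - y (i, false))

lemma two_mul_sum_selected (e : ι → Bool) (y : ι × Bool → ℝ) :
    2 * ∑ i, y (i, e i) = ∑ j, y j + selectionGap e y := by
  rw [Fintype.sum_prod_type, selectionGap, ← sum_add_distrib, mul_sum]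
  refine sum_congr rfl fun i _ => ?_
  cases e i <;> simp only [boolSign, Fintype.sum_bool, if_true, Bool.false_eq_true, if_false] <;>
    ring

lemma selectionGap_zero (e : ι → Bool) : selectionGap e 0 = 0 := by
  simp [selectionGap]

lemma selectionGap_sub (e : ι → Bool) (y z : ι × Bool → ℝ) :
    selectionGap e (y - z) = selectionGap e y - selectionGap e z := by
  simp only [selectionGap, ← sum_sub_distrib, Pi.sub_apply]
  exact sum_congr rfl fun i _ => by ring

lemma abs_selectionGap_le (e : ι → Bool) (y : ι × Bool → ℝ) : |selectionGap e y| ≤ ∑ j, |y j| := by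
  rw [Fintype.sum_prod_type]
  refine (abs_sum_le_sum_abs _ _).trans (sum_le_sum fun i _ => ?_)
  rw [abs_mul, abs_boolSign, one_mul, Fintype.sum_bool]
  exact abs_sub _ _

lemma sum_exp_sum_boolSign_mul_le [DecidableEq ι] (a : ι → ℝ) :
    ∑ e : ι → Bool, Real.exp (∑ i, boolSign (e i) * a i) ≤
      2 ^ Fintype.card ι * Real.exp ((∑ i, a i ^ 2) / 2) :=
  calc ∑ e : ι → Bool, Real.exp (∑ i, boolSign (e i) * a i)
      = ∏ i, ∑ b : Bool, Real.exp (boolSign b * a i) := by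
        simp only [Real.exp_sum, Fintype.prod_sum]
    _ ≤ ∏ i, (2 * Real.exp (a i ^ 2 / 2)) := by
        refine prod_le_prod (fun i _ => by positivity) fun i _ => ?_
        have hcosh := Real.cosh_le_exp_half_sq (a i)
        rw [Real.cosh_eq] at hcosh
        simp only [boolSign, Fintype.sum_bool, if_true, Bool.false_eq_true, if_false, one_mul,
          neg_one_mul]
        linarith
    _ = 2 ^ Fintype.card ι * Real.exp ((∑ i, a i ^ 2) / 2) := by
        rw [prod_mul_distrib, ← Real.exp_sum, sum_div, prod_const, card_univ]

lemma card_lt_sum_boolSign_mul_le [DecidableEq ι] {a : ι → ℝ} {s u : ℝ} (hs : 0 < s)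
    (hu : 0 ≤ u) (ha : ∑ i, a i ^ 2 ≤ s) :
    (#{e : ι → Bool | √(2 * s * u) < ∑ i, boolSign (e i) * a i} : ℝ) ≤
      2 ^ Fintype.card ι * Real.exp (-u) := by
  set l := √(2 * u / s) with hl
  have hl_sq : l ^ 2 = 2 * u / s := Real.sq_sqrt (by positivity)
  have hl_mul : l * √(2 * s * u) = 2 * u := by
    rw [hl, ← Real.sqrt_mul (by positivity),
      show 2 * u / s * (2 * s * u) = (2 * u) ^ 2 by field_simp, Real.sqrt_sq (by positivity)]
  have h_markov : (#{e : ι → Bool | √(2 * s * u) < ∑ i, boolSign (e i) * a i} : ℝ) *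
      Real.exp (2 * u) ≤ ∑ e : ι → Bool, Real.exp (∑ i, boolSign (e i) * (l * a i)) := by
    rw [← nsmul_eq_mul]
    refine (card_nsmul_le_sum _ (fun e : ι → Bool => Real.exp (∑ i, boolSign (e i) * (l * a i))) _
      fun e he => Real.exp_le_exp.2 ?_).trans
      (sum_le_sum_of_subset_of_nonneg (filter_subset _ _) fun _ _ _ => (Real.exp_pos _).le)
    simp only [mul_left_comm _ l, ← mul_sum, ← hl_mul]
    exact mul_le_mul_of_nonneg_left (mem_filter.1 he).2.le (Real.sqrt_nonneg _)
  have h_exponent : (∑ i, (l * a i) ^ 2) / 2 ≤ u := by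
    simp only [mul_pow, ← mul_sum, hl_sq]
    have : 2 * u / s * ∑ i, a i ^ 2 ≤ 2 * u / s * s := by gcongr
    rw [div_mul_cancel₀ _ hs.ne'] at this
    linarith
  refine le_of_mul_le_mul_right ?_ (Real.exp_pos (2 * u))
  refine (h_markov.trans (sum_exp_sum_boolSign_mul_le _)).trans ?_
  rw [mul_assoc, ← Real.exp_add, show -u + 2 * u = u by ring]
  gcongr

lemma card_lt_abs_sum_boolSign_mul_le [DecidableEq ι] {a : ι → ℝ} {s u : ℝ} (hs : 0 < s)
    (hu : 0 ≤ u) (ha : ∑ i, a i ^ 2 ≤ s) :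
    (#{e : ι → Bool | √(2 * s * u) < |∑ i, boolSign (e i) * a i|} : ℝ) ≤
      2 ^ Fintype.card ι * (2 * Real.exp (-u)) := by
  have h_pos := card_lt_sum_boolSign_mul_le hs hu ha
  have h_neg := card_lt_sum_boolSign_mul_le (a := fun i => -a i) hs hu (by simpa using ha)
  have h_union : (#{e : ι → Bool | √(2 * s * u) < |∑ i, boolSign (e i) * a i|} : ℝ) ≤
      #{e : ι → Bool | √(2 * s * u) < ∑ i, boolSign (e i) * a i} +
      #{e : ι → Bool | √(2 * s * u) < ∑ i, boolSign (e i) * -a i} := by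
    simp only [lt_abs, mul_neg, sum_neg_distrib, filter_or]
    exact_mod_cast card_union_le _ _
  linarith

lemma card_lt_abs_selectionGap_le [DecidableEq ι] {y : ι × Bool → ℝ} {s u : ℝ} (hs : 0 < s)
    (hu : 0 ≤ u) (hy : ∑ j, y j ^ 2 ≤ s) :
    (#{e : ι → Bool | √(4 * s * u) < |selectionGap e y|} : ℝ) ≤
      2 ^ Fintype.card ι * (2 * Real.exp (-u)) := by
  rw [show 4 * s * u = 2 * (2 * s) * u by ring]
  refine card_lt_abs_sum_boolSign_mul_le (by positivity) hu ?_
  calc ∑ i, (y (i, true) - y (i, false)) ^ 2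
      ≤ ∑ i, 2 * (y (i, true) ^ 2 + y (i, false) ^ 2) :=
        sum_le_sum fun i _ => by nlinarith [sq_nonneg (y (i, true) + y (i, false))]
    _ = 2 * ∑ j, y j ^ 2 := by simp only [Fintype.sum_prod_type, Fintype.sum_bool, ← mul_sum]
    _ ≤ 2 * s := by gcongr

lemma exists_bad_signs_forall_abs_selectionGap_le {β : Type*} (Q : Finset β) (y : β → ι × Bool → ℝ)
    {s u : ℝ} (hs : 0 < s) (hu : 0 ≤ u) (hy : ∀ q ∈ Q, ∑ j, y q j ^ 2 ≤ s) :
    ∃ bad : Finset (ι → Bool), (#bad : ℝ) ≤ #Q * (2 ^ Fintype.card ι * (2 * Real.exp (-u))) ∧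
      ∀ e ∉ bad, ∀ q ∈ Q, |selectionGap e (y q)| ≤ √(4 * s * u) := by
  classical
  refine ⟨Q.biUnion fun q => {e : ι → Bool | √(4 * s * u) < |selectionGap e (y q)|}, ?_,
    fun e he q hq => ?_⟩
  · rw [← nsmul_eq_mul]
    refine (Nat.cast_le.2 card_biUnion_le).trans ?_
    rw [Nat.cast_sum]
    exact sum_le_card_nsmul _ _ _ fun q hq => card_lt_abs_selectionGap_le hs hu (hy q hq)
  · by_contra! hlt
    exact he (mem_biUnion.2 ⟨q, hq, mem_filter.2 ⟨mem_univ _, hlt⟩⟩)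

end Signs

/-! ## Coverings -/

section VolumetricCovering

variable {W : Type*} [NormedAddCommGroup W] [NormedSpace ℝ W] [FiniteDimensional ℝ W]

lemma packingNumber_closedBall_two_le :
    Metric.packingNumber 1 (Metric.closedBall (0 : W) 2) ≤ (5 ^ Module.finrank ℝ W : ℕ) := by
  simp only [Metric.packingNumber, iSup_le_iff]
  intro C hC hsep
  by_contra! hlt
  obtain ⟨t, htC, ht⟩ := Set.exists_subset_encard_eq (Order.add_one_le_of_lt hlt)
  lift t to Finset W using Set.finite_of_encard_le_coe ht.le
  rw [Set.encard_coe_eq_coe_finsetCard] at ht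
  have hcard : #t ≤ 5 ^ Module.finrank ℝ W :=
    Besicovitch.card_le_of_separated t (fun c hc => by simpa using hC (htC hc))
      fun c hc d hd hne => by
        have hlt : 1 < edist c d := hsep (htC hc) (htC hd) hne
        rw [edist_dist, ENNReal.one_lt_ofReal, dist_eq_norm] at hlt
        exact hlt.le
  have : #t = 5 ^ Module.finrank ℝ W + 1 := by exact_mod_cast ht
  omega

lemma exists_finset_cover_two_mul {R : ℝ} (hR : 0 < R) :
    ∃ S : Finset W, #S ≤ 5 ^ Module.finrank ℝ W ∧
      ∀ w : W, ‖w‖ ≤ 2 * R → ∃ g ∈ S, ‖w - g‖ ≤ R := by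
  classical
  have hle := (Metric.coveringNumber_le_packingNumber _ _).trans
    (packingNumber_closedBall_two_le (W := W))
  obtain ⟨C, -, hfin, hcov, hC⟩ := Metric.exists_set_encard_eq_coveringNumber
    (ne_top_of_le_ne_top (ENat.natCast_ne_top _) hle)
  lift C to Finset W using hfin
  rw [← hC, Set.encard_coe_eq_coe_finsetCard, Nat.cast_le] at hle
  refine ⟨C.image (R • ·), card_image_le.trans hle, fun w hw => ?_⟩
  have hRw : R⁻¹ • w ∈ Metric.closedBall (0 : W) 2 := by
    rw [mem_closedBall_zero_iff, norm_smul, Real.norm_of_nonneg (by positivity)]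
    exact (inv_mul_le_iff₀ hR).2 (by linarith)
  obtain ⟨g, hg, hwg⟩ := Set.mem_iUnion₂.1 (Metric.isCover_iff_subset_iUnion_closedBall.1 hcov hRw)
  refine ⟨R • g, mem_image_of_mem _ hg, ?_⟩
  rw [Metric.mem_closedBall, dist_eq_norm, NNReal.coe_one] at hwg
  rw [show w - R • g = R • (R⁻¹ • w - g) by rw [smul_sub, smul_inv_smul₀ hR.ne'], norm_smul,
    Real.norm_of_nonneg hR.le]
  exact mul_le_of_le_one_right hR.le hwg

lemma exists_finset_cover_four_mul {R : ℝ} (hR : 0 < R) :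
    ∃ S : Finset W, #S ≤ 25 ^ Module.finrank ℝ W ∧
      ∀ w : W, ‖w‖ ≤ 4 * R → ∃ g ∈ S, ‖w - g‖ ≤ R := by
  classical
  obtain ⟨S, hS, hcov⟩ := exists_finset_cover_two_mul (W := W) hR
  obtain ⟨S', hS', hcov'⟩ := exists_finset_cover_two_mul (W := W) (R := 2 * R) (by positivity)
  refine ⟨image₂ (· + ·) S' S, ?_, fun w hw => ?_⟩
  · rw [show 25 = 5 * 5 from rfl, mul_pow]
    exact (card_image₂_le _ _ _).trans (Nat.mul_le_mul hS' hS)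
  · obtain ⟨g', hg', hwg'⟩ := hcov' w (by linarith)
    obtain ⟨g, hg, hwg⟩ := hcov (w - g') hwg'
    exact ⟨g' + g, mem_image₂_of_mem hg' hg, by rwa [← sub_sub]⟩

end VolumetricCovering

/-- A finite cover of `T` by balls of radius `ε` with centres in `T`. -/
structure IsInternalCover {W : Type*} [PseudoMetricSpace W] (T : Set W) (P : Finset W) (ε : ℝ) :
    Prop where
  subset : ↑P ⊆ T
  exists_dist_le : ∀ y ∈ T, ∃ z ∈ P, dist y z ≤ ε

namespace IsInternalCover

lemma mono {W : Type*} [PseudoMetricSpace W] {T : Set W} {P : Finset W} {ε δ : ℝ}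
    (hP : IsInternalCover T P ε) (h : ε ≤ δ) : IsInternalCover T P δ :=
  ⟨hP.subset, fun y hy => (hP.exists_dist_le y hy).imp fun _ hz => ⟨hz.1, hz.2.trans h⟩⟩

lemma exists_refinement {W : Type*} [SeminormedAddCommGroup W] {T : Set W} {P : Finset W} {ε : ℝ}
    (hP : IsInternalCover T P ε) (S : Finset W)
    (hS : ∀ y ∈ T, ∀ z ∈ T, ‖y - z‖ ≤ ε → ∃ g ∈ S, ‖y - z - g‖ ≤ ε / 4) :
    ∃ P' : Finset W, IsInternalCover T P' (ε / 2) ∧ #P' ≤ #P * #S := by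
  classical
  let IsNear (q : W × W) (y : W) : Prop := y ∈ T ∧ ‖y - q.1 - q.2‖ ≤ ε / 4
  let near : Finset (W × W) := {q ∈ P ×ˢ S | ∃ y, IsNear q y}
  choose! rep hrep using fun q (hq : q ∈ near) => (mem_filter.1 hq).2
  refine ⟨near.image rep, ⟨?_, fun y hy => ?_⟩, ?_⟩
  · simp only [coe_image, Set.image_subset_iff]
    exact fun q hq => (hrep q hq).1
  · obtain ⟨z, hz, hyz⟩ := hP.exists_dist_le y hy
    obtain ⟨g, hg, hyg⟩ := hS y hy z (hP.subset hz) (by rwa [← dist_eq_norm])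
    have hq : (z, g) ∈ near := mem_filter.2 ⟨mk_mem_product hz hg, y, hy, hyg⟩
    refine ⟨rep (z, g), mem_image_of_mem _ hq, ?_⟩
    rw [dist_eq_norm, show y - rep (z, g) = (y - z - g) - (rep (z, g) - z - g) by abel]
    linarith [norm_sub_le (y - z - g) (rep (z, g) - z - g), (hrep _ hq).2]
  · rw [← card_product]
    exact card_image_le.trans (card_filter_le _ _)

end IsInternalCover

section SampleCovering

variable {ι E : Type*} [NormedAddCommGroup E] [InnerProductSpace ℝ E]

/-- Evaluation at the sample vectors `κ j`; the sup norm on `ι → ℝ` turns `‖sampleMap κ v‖` into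
the uniform norm of `v` on the sample. -/
def sampleMap (κ : ι → E) : E →ₗ[ℝ] ι → ℝ := LinearMap.pi fun j => innerₗ E (κ j)

variable [Fintype ι]

lemma exists_norm_sub_smul_sq_le {H ε : ℝ} (hH : 0 < H) (hε : 0 < ε) {x v : E} (hx : ‖x‖ ≤ H)
    (hv : ε ≤ |⟪x, v⟫|) :
    ∃ b, ‖v - (boolSign b * (ε / H ^ 2)) • x‖ ^ 2 ≤ ‖v‖ ^ 2 - ε ^ 2 / H ^ 2 := by
  obtain ⟨b, hb⟩ := exists_boolSign_mul_eq_abs ⟪x, v⟫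
  refine ⟨b, ?_⟩
  have hb_sq : boolSign b ^ 2 = 1 := by rw [← sq_abs, abs_boolSign, one_pow]
  have h_quad : (ε / H ^ 2) ^ 2 * ‖x‖ ^ 2 ≤ ε ^ 2 / H ^ 2 :=
    calc (ε / H ^ 2) ^ 2 * ‖x‖ ^ 2 ≤ (ε / H ^ 2) ^ 2 * H ^ 2 := by gcongr
      _ = ε ^ 2 / H ^ 2 := by field_simp
  have h_lin : ε ^ 2 / H ^ 2 ≤ ε / H ^ 2 * |⟪x, v⟫| :=
    calc ε ^ 2 / H ^ 2 = ε / H ^ 2 * ε := by ring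
      _ ≤ ε / H ^ 2 * |⟪x, v⟫| := by gcongr
  rw [norm_sub_sq_real, inner_smul_right, real_inner_comm, norm_smul, mul_pow, Real.norm_eq_abs,
    sq_abs, mul_pow, hb_sq, one_mul]
  have : boolSign b * (ε / H ^ 2) * ⟪x, v⟫ = ε / H ^ 2 * |⟪x, v⟫| := by rw [← hb]; ring
  linarith

/-- The moves of the perceptron algorithm: subtracting one of them decreases `‖v‖ ^ 2` by a fixed
amount as long as some sample value of `v` is large. -/
def perceptronSteps [DecidableEq E] (κ : ι → E) (η : ℝ) : Finset E :=
  insert 0 (univ.image fun jb : ι × Bool => (boolSign jb.2 * η) • κ jb.1)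

lemma card_perceptronSteps_le [DecidableEq E] (κ : ι → E) (η : ℝ) :
    #(perceptronSteps κ η) ≤ 2 * Fintype.card ι + 1 := by
  refine (card_insert_le _ _).trans (Nat.add_le_add_right (card_image_le.trans ?_) 1)
  rw [card_univ, Fintype.card_prod, Fintype.card_bool, mul_comm]

lemma exists_mem_perceptronSteps_norm_sub_sq_le [DecidableEq E] {κ : ι → E} {H ε : ℝ}
    (hH : 0 < H) (hε : 0 < ε) (hκ : ∀ j, ‖κ j‖ ≤ H) {v : E} (hv : ε < ‖sampleMap κ v‖) :
    ∃ a ∈ perceptronSteps κ (ε / H ^ 2), ‖v - a‖ ^ 2 * H ^ 2 ≤ ‖v‖ ^ 2 * H ^ 2 - ε ^ 2 := by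
  rw [← not_le, pi_norm_le_iff_of_nonneg hε.le] at hv
  push Not at hv
  obtain ⟨j, hj⟩ := hv
  obtain ⟨b, hb⟩ := exists_norm_sub_smul_sq_le hH hε (hκ j) hj.le
  refine ⟨_, mem_insert_of_mem (mem_image_of_mem _ (mem_univ (j, b))), ?_⟩
  calc ‖v - (boolSign b * (ε / H ^ 2)) • κ j‖ ^ 2 * H ^ 2
      ≤ (‖v‖ ^ 2 - ε ^ 2 / H ^ 2) * H ^ 2 := by gcongr
    _ = ‖v‖ ^ 2 * H ^ 2 - ε ^ 2 := by field_simp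

lemma exists_finset_cover_of_norm_sq_le {κ : ι → E} {H ε : ℝ} (hH : 0 < H) (hε : 0 < ε)
    (hκ : ∀ j, ‖κ j‖ ≤ H) (n : ℕ) :
    ∃ S : Finset E, #S ≤ (2 * Fintype.card ι + 1) ^ n ∧ 0 ∈ S ∧
      ∀ v : E, ‖v‖ ^ 2 * H ^ 2 ≤ n * ε ^ 2 → ∃ g ∈ S, ‖sampleMap κ v - sampleMap κ g‖ ≤ ε := by
  classical
  induction n with
  | zero =>
    refine ⟨{0}, by simp, mem_singleton_self 0, fun v hv => ⟨0, mem_singleton_self 0, ?_⟩⟩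
    have : v = 0 := by
      by_contra hne
      have := norm_pos_iff.2 hne
      rw [Nat.cast_zero, zero_mul] at hv
      exact absurd hv (not_le.2 (by positivity))
    simpa [this] using hε.le
  | succ n ih =>
    obtain ⟨S, hS, hS_zero, hcov⟩ := ih
    have hzero : (0 : E) ∈ image₂ (· + ·) (perceptronSteps κ (ε / H ^ 2)) S :=
      mem_image₂.2 ⟨0, mem_insert_self _ _, 0, hS_zero, zero_add 0⟩
    refine ⟨image₂ (· + ·) (perceptronSteps κ (ε / H ^ 2)) S, ?_, hzero, fun v hv => ?_⟩
    · rw [pow_succ' (2 * Fintype.card ι + 1)]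
      exact (card_image₂_le _ _ _).trans (Nat.mul_le_mul (card_perceptronSteps_le _ _) hS)
    rcases le_or_gt ‖sampleMap κ v‖ ε with hsmall | hlarge
    · exact ⟨0, hzero, by rwa [map_zero, sub_zero]⟩
    obtain ⟨a, ha, hva⟩ := exists_mem_perceptronSteps_norm_sub_sq_le hH hε hκ hlarge
    push_cast at hv
    obtain ⟨g, hg, hvg⟩ := hcov (v - a) (by linarith)
    exact ⟨a + g, mem_image₂_of_mem ha hg, by rwa [map_add, ← sub_sub, ← map_sub]⟩

lemma exists_finset_cover_of_norm_sq_le_exp {κ : ι → E} {H ε a : ℝ} (hH : 0 < H) (hε : 0 < ε)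
    (ha : 0 ≤ a) (hκ : ∀ j, ‖κ j‖ ≤ H) :
    ∃ S : Finset (ι → ℝ), (#S : ℝ) ≤ Real.exp ((a + 1) * Real.log (2 * Fintype.card ι + 1)) ∧
      ∀ v : E, ‖v‖ ^ 2 * H ^ 2 ≤ a * ε ^ 2 → ∃ g ∈ S, ‖sampleMap κ v - g‖ ≤ ε := by
  classical
  obtain ⟨S, hS, -, hcov⟩ := exists_finset_cover_of_norm_sq_le hH hε hκ ⌈a⌉₊
  refine ⟨S.image (sampleMap κ), ?_, fun v hv => ?_⟩
  · have hpos : (0 : ℝ) < 2 * Fintype.card ι + 1 := by positivity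
    calc (#(S.image (sampleMap κ)) : ℝ) ≤ (2 * Fintype.card ι + 1 : ℝ) ^ ⌈a⌉₊ := by
          exact_mod_cast card_image_le.trans hS
      _ = Real.exp (⌈a⌉₊ * Real.log (2 * Fintype.card ι + 1)) := by
          rw [Real.exp_nat_mul, Real.exp_log hpos]
      _ ≤ Real.exp ((a + 1) * Real.log (2 * Fintype.card ι + 1)) := by
          gcongr
          · exact Real.log_nonneg (by linarith [Nat.cast_nonneg (α := ℝ) (Fintype.card ι)])
          · exact (Nat.ceil_lt_add_one ha).le
  · obtain ⟨g, hg, hvg⟩ := hcov v (hv.trans (by gcongr; exact Nat.le_ceil a))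
    exact ⟨_, mem_image_of_mem _ hg, hvg⟩

lemma exists_finset_cover_of_norm_sampleMap_le_exp [FiniteDimensional ℝ E] (κ : ι → E) {ε : ℝ}
    (hε : 0 < ε) :
    ∃ S : Finset (ι → ℝ), (#S : ℝ) ≤ Real.exp (4 * Module.finrank ℝ E) ∧
      ∀ v : E, ‖sampleMap κ v‖ ≤ 4 * ε → ∃ g ∈ S, ‖sampleMap κ v - g‖ ≤ ε := by
  classical
  obtain ⟨S, hS, hcov⟩ := exists_finset_cover_four_mul (W := LinearMap.range (sampleMap κ)) hε
  refine ⟨S.image Subtype.val, ?_, fun v hv => ?_⟩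
  · have h25 : (25 : ℝ) ≤ Real.exp 4 :=
      calc (25 : ℝ) ≤ 2.7 ^ 4 := by norm_num
        _ ≤ Real.exp 1 ^ 4 := by gcongr; linarith [Real.exp_one_gt_d9]
        _ = Real.exp 4 := by rw [← Real.exp_nat_mul]; norm_num
    calc (#(S.image Subtype.val) : ℝ) ≤ 25 ^ Module.finrank ℝ (LinearMap.range (sampleMap κ)) := by
          exact_mod_cast card_image_le.trans hS
      _ ≤ 25 ^ Module.finrank ℝ E :=
          pow_le_pow_right₀ (by norm_num) (LinearMap.finrank_range_le _)
      _ ≤ Real.exp 4 ^ Module.finrank ℝ E := by gcongr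
      _ = Real.exp (4 * Module.finrank ℝ E) := by rw [mul_comm, Real.exp_nat_mul]
  · obtain ⟨g, hg, hvg⟩ := hcov ⟨_, LinearMap.mem_range_self _ v⟩ hv
    exact ⟨g, mem_image_of_mem _ hg, hvg⟩

end SampleCovering

section DyadicRadius

/-- The radii at which the `p`-th power of the resolution is halved at each step. -/
def dyadicRadius (p M : ℝ) (k : ℕ) : ℝ := M * (1 / 2) ^ ((k : ℝ) / p)

variable {p M : ℝ}

lemma dyadicRadius_zero (p M : ℝ) : dyadicRadius p M 0 = M := by
  simp [dyadicRadius]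

lemma dyadicRadius_pos (p : ℝ) (hM : 0 < M) (k : ℕ) : 0 < dyadicRadius p M k := by
  unfold dyadicRadius; positivity

lemma dyadicRadius_div_rpow (hp : p ≠ 0) (hM : M ≠ 0) (k : ℕ) :
    (dyadicRadius p M k / M) ^ p = (1 / 2) ^ k := by
  rw [dyadicRadius, mul_div_cancel_left₀ _ hM, ← Real.rpow_mul (by norm_num),
    div_mul_cancel₀ _ hp, Real.rpow_natCast]

lemma dyadicRadius_antitone (hp : 0 ≤ p) (hM : 0 ≤ M) : Antitone (dyadicRadius p M) := by
  intro i j hij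
  unfold dyadicRadius
  gcongr ?_ * ?_
  exact Real.rpow_le_rpow_of_exponent_ge (by norm_num) (by norm_num) (by gcongr)

lemma half_dyadicRadius_le_succ (hp : 1 ≤ p) (hM : 0 ≤ M) (k : ℕ) :
    dyadicRadius p M k / 2 ≤ dyadicRadius p M (k + 1) := by
  have hp_inv : 1 / p ≤ 1 := (div_le_one (by linarith)).2 hp
  have hhalf : (1 / 2 : ℝ) ≤ (1 / 2) ^ (1 / p) := by
    simpa only [Real.rpow_one] using
      Real.rpow_le_rpow_of_exponent_ge (by norm_num : (0 : ℝ) < 1 / 2) (by norm_num) hp_inv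
  unfold dyadicRadius
  rw [Nat.cast_add_one, add_div, Real.rpow_add (by norm_num), ← mul_assoc, div_eq_mul_one_div]
  gcongr

end DyadicRadius

/-- The logarithm of the cardinality of a cover refined `k` times, the `i`-th refinement costing
the smaller of the perceptron bound `c * 2 ^ i * L` and the volumetric bound `4 * N`. -/
def entropyExponent (c L : ℝ) (N k : ℕ) : ℝ := ∑ i ∈ range k, min (c * 2 ^ i * L) (4 * N)

section Entropy

variable {ι E : Type*} [Fintype ι] [NormedAddCommGroup E] [InnerProductSpace ℝ E]
  [FiniteDimensional ℝ E]

lemma IsInternalCover.exists_half {κ : ι → E} {B : Set E} {P : Finset (ι → ℝ)} {H ε a : ℝ}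
    (hP : IsInternalCover (sampleMap κ '' B) P ε) (hH : 0 < H) (hε : 0 < ε) (ha : 0 ≤ a)
    (hκ : ∀ j, ‖κ j‖ ≤ H)
    (hB : ∀ v ∈ B, ∀ w ∈ B, ‖sampleMap κ (v - w)‖ ≤ ε → ‖v - w‖ ^ 2 * H ^ 2 ≤ a * ε ^ 2) :
    ∃ P' : Finset (ι → ℝ), IsInternalCover (sampleMap κ '' B) P' (ε / 2) ∧
      (#P' : ℝ) ≤ #P * Real.exp
        (min ((16 * a + 1) * Real.log (2 * Fintype.card ι + 1)) (4 * Module.finrank ℝ E)) := by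
  obtain ⟨S, hS, hcov⟩ : ∃ S : Finset (ι → ℝ), (#S : ℝ) ≤ Real.exp
        (min ((16 * a + 1) * Real.log (2 * Fintype.card ι + 1)) (4 * Module.finrank ℝ E)) ∧
      ∀ v ∈ B, ∀ w ∈ B, ‖sampleMap κ (v - w)‖ ≤ ε →
        ∃ g ∈ S, ‖sampleMap κ (v - w) - g‖ ≤ ε / 4 := by
    rcases min_choice ((16 * a + 1) * Real.log (2 * Fintype.card ι + 1))
      (4 * (Module.finrank ℝ E : ℝ)) with h | h <;> rw [h]
    · obtain ⟨S, hS, hcov⟩ := exists_finset_cover_of_norm_sq_le_exp (a := 16 * a) hH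
        (div_pos hε four_pos) (by positivity) hκ
      refine ⟨S, hS, fun v hv w hw hvw => hcov _ ((hB v hv w hw hvw).trans_eq ?_)⟩
      ring
    · obtain ⟨S, hS, hcov⟩ := exists_finset_cover_of_norm_sampleMap_le_exp κ (div_pos hε four_pos)
      exact ⟨S, hS, fun v _ w _ hvw => hcov _ (by linarith)⟩
  obtain ⟨P', hP', hcard⟩ := hP.exists_refinement S (by
    rintro _ ⟨v, hv, rfl⟩ _ ⟨w, hw, rfl⟩ hvw
    rw [← map_sub] at hvw ⊢
    exact hcov v hv w hw hvw)
  refine ⟨P', hP', ?_⟩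
  calc (#P' : ℝ) ≤ #P * #S := by exact_mod_cast hcard
    _ ≤ _ := by gcongr

/-- The hypothesis on differences is the duality between the sample and the Hilbert norm: it bounds
the number of perceptron steps needed to halve the resolution. -/
theorem exists_isInternalCover_dyadicRadius {κ : ι → E} {B : Set E} {p M H Q : ℝ}
    (h_zero : 0 ∈ B) (hp : 1 ≤ p) (hM : 0 < M) (hH : 0 < H) (hQ : 0 ≤ Q)
    (hκ : ∀ j, ‖κ j‖ ≤ H) (hBM : ∀ v ∈ B, ‖sampleMap κ v‖ ≤ M)
    (hB : ∀ v ∈ B, ∀ w ∈ B, ∀ ε, 0 < ε → ‖sampleMap κ (v - w)‖ ≤ ε →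
      ‖v - w‖ ^ 2 * H ^ 2 ≤ Q * ε ^ 2 * (M / ε) ^ p) (k : ℕ) :
    ∃ P : Finset (ι → ℝ), (k = 0 → P = {0}) ∧
      IsInternalCover (sampleMap κ '' B) P (dyadicRadius p M k) ∧
      (#P : ℝ) ≤ Real.exp (entropyExponent (16 * Q + 1) (Real.log (2 * Fintype.card ι + 1))
        (Module.finrank ℝ E) k) := by
  induction k with
  | zero =>
    refine ⟨{0}, fun _ => rfl, ⟨?_, ?_⟩, by simp [entropyExponent]⟩
    · simpa using ⟨0, h_zero, map_zero _⟩
    · rintro _ ⟨v, hv, rfl⟩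
      exact ⟨0, mem_singleton_self 0, by simpa [dyadicRadius_zero] using hBM v hv⟩
  | succ k ih =>
    obtain ⟨P, -, hP, hcard⟩ := ih
    have hr := dyadicRadius_pos p hM k
    have hratio : (M / dyadicRadius p M k) ^ p = 2 ^ k := by
      rw [← inv_div, Real.inv_rpow (by positivity),
        dyadicRadius_div_rpow (by linarith) hM.ne', one_div, inv_pow, inv_inv]
    obtain ⟨P', hP', hcard'⟩ := hP.exists_half (a := Q * 2 ^ k) hH hr (by positivity) hκ
      fun v hv w hw hvw => (hB v hv w hw _ hr hvw).trans_eq (by rw [hratio]; ring)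
    refine ⟨P', by simp, hP'.mono (half_dyadicRadius_le_succ hp hM.le k), hcard'.trans ?_⟩
    have hlog : 0 ≤ Real.log (2 * Fintype.card ι + 1 : ℝ) :=
      Real.log_nonneg (by linarith [Nat.cast_nonneg (α := ℝ) (Fintype.card ι)])
    rw [entropyExponent, sum_range_succ, Real.exp_add]
    gcongr
    · exact hcard
    · linarith [one_le_pow₀ (M₀ := ℝ) one_le_two (n := k)]

end Entropy

/-! ## Chaining -/

lemma exp_mul_exp_mul_exp_neg_le (h : ℝ) (k : ℕ) :
    Real.exp h * Real.exp h * (2 * Real.exp (-(2 * h + k + 4))) ≤ 1 / 8 * (1 / 2) ^ k := by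
  have h_exp : Real.exp (-1) ≤ 1 / 2 := by
    rw [Real.exp_neg, one_div]
    exact inv_anti₀ two_pos (by linarith [Real.exp_one_gt_d9])
  calc Real.exp h * Real.exp h * (2 * Real.exp (-(2 * h + k + 4)))
      = 2 * Real.exp (-1) ^ (k + 4) := by
        rw [← Real.exp_nat_mul, ← Real.exp_add, mul_left_comm, ← Real.exp_add]
        push_cast; ring_nf
    _ ≤ 2 * (1 / 2) ^ (k + 4) := by gcongr
    _ = 1 / 8 * (1 / 2) ^ k := by ring

/-- A nonnegative process on `T` whose squared increments are controlled by its own values and by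
the `p`-th power of the distance, measured at scale `M`. -/
structure IsSelfBounding {W J : Type*} [PseudoMetricSpace W] [Fintype J] (T : Set W)
    (Y : W → J → ℝ) (p M D S : ℝ) : Prop where
  nonneg : ∀ y ∈ T, ∀ j, 0 ≤ Y y j
  sq_sub_le : ∀ y ∈ T, ∀ z ∈ T, ∀ j, (Y y j - Y z j) ^ 2 ≤ D * (dist y z / M) ^ p * (Y y j + Y z j)
  sum_le : ∀ y ∈ T, ∑ j, Y y j ≤ S

namespace IsSelfBounding

variable {W : Type*} [PseudoMetricSpace W] {T : Set W} {p M D S : ℝ}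

lemma sum_sq_sub_le {J : Type*} [Fintype J] {Y : W → J → ℝ} (hY : IsSelfBounding T Y p M D S)
    (hp : 0 ≤ p) (hM : 0 < M) (hD : 0 ≤ D) {y z : W} (hy : y ∈ T) (hz : z ∈ T) {δ : ℝ}
    (hyz : dist y z ≤ δ) : ∑ j, (Y y j - Y z j) ^ 2 ≤ 2 * D * S * (δ / M) ^ p := by
  have hδ : 0 ≤ δ := dist_nonneg.trans hyz
  calc ∑ j, (Y y j - Y z j) ^ 2 ≤ ∑ j, D * (δ / M) ^ p * (Y y j + Y z j) := by
        refine sum_le_sum fun j _ => (hY.sq_sub_le y hy z hz j).trans ?_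
        have := add_nonneg (hY.nonneg y hy j) (hY.nonneg z hz j)
        gcongr
    _ = D * (δ / M) ^ p * (∑ j, Y y j + ∑ j, Y z j) := by rw [← mul_sum, sum_add_distrib]
    _ ≤ D * (δ / M) ^ p * (S + S) := by gcongr <;> apply hY.sum_le <;> assumption
    _ = 2 * D * S * (δ / M) ^ p := by ring

variable {ι : Type*} [Fintype ι] {Y : W → ι × Bool → ℝ}

lemma abs_selectionGap_sub_le (hY : IsSelfBounding T Y p M D S) (hp : 0 < p) (hM : 0 < M)
    (hD : 0 ≤ D) {y z : W} (hy : y ∈ T) (hz : z ∈ T) {k : ℕ}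
    (hyz : dist y z ≤ dyadicRadius p M k) (hk : Fintype.card (ι × Bool) ≤ 2 ^ k) (e : ι → Bool) :
    |selectionGap e (Y y - Y z)| ≤ √(2 * D * S) := by
  refine (abs_selectionGap_le e _).trans (Real.le_sqrt_of_sq_le ?_)
  calc (∑ j, |(Y y - Y z) j|) ^ 2 ≤ Fintype.card (ι × Bool) * ∑ j, |(Y y - Y z) j| ^ 2 := by
        rw [← card_univ]
        exact sq_sum_le_card_mul_sum_sq
    _ ≤ 2 ^ k * (2 * D * S * (1 / 2) ^ k) := by
        simp only [Pi.sub_apply, sq_abs]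
        have := hY.sum_sq_sub_le hp.le hM hD hy hz hyz
        rw [dyadicRadius_div_rpow hp.ne' hM.ne'] at this
        gcongr
        exact_mod_cast hk
    _ = 2 * D * S := by rw [one_div_pow]; field_simp

lemma exists_bad_signs_link (hY : IsSelfBounding T Y p M D S) (hp : 0 < p)
    (hp_two : p ≤ 2) (hM : 0 < M) (hD : 0 < D) (hS : 0 < S) {P P' : Finset W} (hP : ↑P ⊆ T)
    (hP' : ↑P' ⊆ T) {h : ℝ} (hh : 0 ≤ h) (hP_card : (#P : ℝ) ≤ Real.exp h)
    (hP'_card : (#P' : ℝ) ≤ Real.exp h) (k : ℕ) :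
    ∃ bad : Finset (ι → Bool), (#bad : ℝ) ≤ 2 ^ Fintype.card ι * (1 / 8 * (1 / 2) ^ k) ∧
      ∀ e ∉ bad, ∀ y ∈ P, ∀ z ∈ P', dist z y ≤ 2 * dyadicRadius p M k →
        |selectionGap e (Y z) - selectionGap e (Y y)| ≤
          √(32 * D * S * ((1 / 2) ^ k * (2 * h + k + 4))) := by
  classical
  obtain ⟨bad, hbad, hgap⟩ := exists_bad_signs_forall_abs_selectionGap_le
    {q ∈ P ×ˢ P' | dist q.2 q.1 ≤ 2 * dyadicRadius p M k} (fun q => Y q.2 - Y q.1)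
    (s := 8 * D * S * (1 / 2) ^ k) (u := 2 * h + k + 4) (by positivity) (by positivity) (by
      intro q hq
      obtain ⟨hqP, hq⟩ := mem_filter.1 hq
      obtain ⟨hq1, hq2⟩ := mem_product.1 hqP
      refine (hY.sum_sq_sub_le hp.le hM hD.le (hP' hq2) (hP hq1) hq).trans ?_
      have h_four : (2 : ℝ) ^ p ≤ 4 :=
        (Real.rpow_le_rpow_of_exponent_le one_le_two hp_two).trans_eq (by norm_num)
      rw [mul_div_assoc, Real.mul_rpow two_pos.le (by have := dyadicRadius_pos p hM k; positivity),
        dyadicRadius_div_rpow hp.ne' hM.ne']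
      calc 2 * D * S * (2 ^ p * (1 / 2) ^ k) ≤ 2 * D * S * (4 * (1 / 2) ^ k) := by gcongr
        _ = 8 * D * S * (1 / 2) ^ k := by ring)
  refine ⟨bad, hbad.trans ?_, fun e he y hy z hz hyz => ?_⟩
  · calc _ ≤ Real.exp h * Real.exp h *
          (2 ^ Fintype.card ι * (2 * Real.exp (-(2 * h + k + 4)))) := by
          gcongr
          refine (Nat.cast_le.2 (card_filter_le _ _)).trans ?_
          rw [card_product, Nat.cast_mul]
          gcongr
      _ ≤ 2 ^ Fintype.card ι * (1 / 8 * (1 / 2) ^ k) := by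
          rw [mul_left_comm]
          exact mul_le_mul_of_nonneg_left (exp_mul_exp_mul_exp_neg_le h k) (by positivity)
  · rw [← selectionGap_sub]
    refine (hgap e he (y, z) (mem_filter.2 ⟨mk_mem_product hy hz, hyz⟩)).trans_eq ?_
    ring_nf

lemma abs_selectionGap_le_of_links (hY : IsSelfBounding T Y p M D S) (hp : 0 < p) (hM : 0 < M)
    (hD : 0 ≤ D) {P : ℕ → Finset W} {o : W} (hP_zero : P 0 = {o}) (ho : Y o = 0)
    (hP : ∀ k, IsInternalCover T (P k) (dyadicRadius p M k)) {e : ι → Bool} {b : ℕ → ℝ} {n : ℕ}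
    (hlink : ∀ k < n, ∀ y ∈ P k, ∀ z ∈ P (k + 1), dist z y ≤ 2 * dyadicRadius p M k →
      |selectionGap e (Y z) - selectionGap e (Y y)| ≤ b k)
    (hn : Fintype.card (ι × Bool) ≤ 2 ^ n) {y : W} (hy : y ∈ T) :
    |selectionGap e (Y y)| ≤ ∑ k ∈ range n, b k + √(2 * D * S) := by
  choose π hπ hyπ using fun k => (hP k).exists_dist_le y hy
  have hπ_link : ∀ k < n, |selectionGap e (Y (π (k + 1))) - selectionGap e (Y (π k))| ≤ b k := by
    refine fun k hk => hlink k hk _ (hπ k) _ (hπ (k + 1)) ?_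
    have := dyadicRadius_antitone hp.le hM.le k.le_succ
    linarith [dist_triangle_left (π (k + 1)) (π k) y, hyπ k, hyπ (k + 1)]
  have hπ_zero : selectionGap e (Y (π 0)) = 0 := by
    have : π 0 = o := by simpa only [hP_zero, mem_singleton] using hπ 0
    rw [this, ho, selectionGap_zero]
  have h_telescope : selectionGap e (Y (π n)) =
      ∑ k ∈ range n, (selectionGap e (Y (π (k + 1))) - selectionGap e (Y (π k))) := by
    rw [sum_range_sub (fun k => selectionGap e (Y (π k))), hπ_zero, sub_zero]
  have h_chain : |selectionGap e (Y (π n))| ≤ ∑ k ∈ range n, b k := by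
    rw [h_telescope]
    exact (abs_sum_le_sum_abs _ _).trans (sum_le_sum fun k hk => hπ_link k (mem_range.1 hk))
  have h_last := hY.abs_selectionGap_sub_le hp hM hD hy ((hP n).subset (hπ n)) (hyπ n) hn e
  rw [selectionGap_sub] at h_last
  linarith [abs_sub_abs_le_abs_sub (selectionGap e (Y y)) (selectionGap e (Y (π n)))]

theorem exists_bad_signs_chaining (hY : IsSelfBounding T Y p M D S) (hp : 0 < p)
    (hp_two : p ≤ 2) (hM : 0 < M) (hD : 0 < D) (hS : 0 < S) {P : ℕ → Finset W} {o : W}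
    (hP_zero : P 0 = {o}) (ho : Y o = 0)
    (hP : ∀ k, IsInternalCover T (P k) (dyadicRadius p M k)) {h : ℕ → ℝ} (hh : Monotone h)
    (hh_zero : 0 ≤ h 0) (hcard : ∀ k, (#(P k) : ℝ) ≤ Real.exp (h k)) {n : ℕ}
    (hn : Fintype.card (ι × Bool) ≤ 2 ^ n) :
    ∃ bad : Finset (ι → Bool), 4 * (#bad : ℝ) ≤ 2 ^ Fintype.card ι ∧
      ∀ e ∉ bad, ∀ y ∈ T, |selectionGap e (Y y)| ≤
        ∑ k ∈ range n, √(32 * D * S * ((1 / 2) ^ k * (2 * h (k + 1) + k + 4)))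
          + √(2 * D * S) := by
  classical
  choose bad hbad hlink using fun k => hY.exists_bad_signs_link hp hp_two hM hD hS (hP k).subset
    (hP (k + 1)).subset (hh_zero.trans (hh (k + 1).zero_le))
    ((hcard k).trans (Real.exp_le_exp.2 (hh k.le_succ))) (hcard (k + 1)) k
  refine ⟨(range n).biUnion bad, ?_, fun e he y hy => ?_⟩
  · have h_sum : (#((range n).biUnion bad) : ℝ) ≤
        ∑ k ∈ range n, 2 ^ Fintype.card ι * (1 / 8 * (1 / 2) ^ k) := by
      refine (Nat.cast_le.2 card_biUnion_le).trans ?_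
      rw [Nat.cast_sum]
      exact sum_le_sum fun k _ => hbad k
    rw [← mul_sum, ← mul_sum] at h_sum
    nlinarith [sum_geometric_two_le n, pow_pos (two_pos (α := ℝ)) (Fintype.card ι)]
  · refine hY.abs_selectionGap_le_of_links hp hM hD.le hP_zero ho hP (fun k hk => ?_) hn hy
    exact hlink k e fun hmem => he (mem_biUnion.2 ⟨k, mem_range.2 hk, hmem⟩)

end IsSelfBounding

section EntropySum

variable {c L : ℝ}

lemma entropyExponent_monotone (hc : 0 ≤ c) (hL : 0 ≤ L) (N : ℕ) :
    Monotone (entropyExponent c L N) := by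
  refine monotone_nat_of_le_succ fun k => ?_
  rw [entropyExponent, entropyExponent, sum_range_succ]
  exact le_add_of_nonneg_right (le_min (by positivity) (by positivity))

lemma entropyExponent_le_two_pow (hc : 0 ≤ c) (hL : 0 ≤ L) (N k : ℕ) :
    entropyExponent c L N k ≤ c * 2 ^ k * L := by
  calc entropyExponent c L N k ≤ ∑ i ∈ range k, c * L * 2 ^ i :=
        sum_le_sum fun i _ => (min_le_left _ _).trans_eq (mul_right_comm _ _ _)
    _ = c * L * (2 ^ k - 1) := by rw [← mul_sum, geom_sum_eq (by norm_num)]; norm_num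
    _ ≤ c * 2 ^ k * L := by nlinarith [mul_nonneg hc hL]

lemma entropyExponent_add_le (hc : 0 ≤ c) (hL : 0 ≤ L) (N j i : ℕ) :
    entropyExponent c L N (j + i) ≤ c * 2 ^ j * L + 4 * N * i := by
  rw [entropyExponent, sum_range_add]
  refine add_le_add (entropyExponent_le_two_pow hc hL N j) ?_
  calc ∑ k ∈ range i, min (c * 2 ^ (j + k) * L) (4 * (N : ℝ)) ≤ ∑ _k ∈ range i, 4 * (N : ℝ) :=
        sum_le_sum fun k _ => min_le_right _ _
    _ = 4 * N * i := by rw [sum_const, card_range, nsmul_eq_mul, mul_comm]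

lemma succ_mul_half_pow_le (i : ℕ) : ((i : ℝ) + 1) * (1 / 2) ^ i ≤ 2 * ((7 / 8) ^ i) ^ 2 := by
  have h_bernoulli : (i : ℝ) + 1 ≤ 2 * (3 / 2) ^ i := by
    have := one_add_mul_le_pow (by norm_num : (-2 : ℝ) ≤ 1 / 2) i
    norm_num at this ⊢
    linarith
  calc ((i : ℝ) + 1) * (1 / 2) ^ i ≤ 2 * (3 / 2) ^ i * (1 / 2) ^ i := by gcongr
    _ = 2 * (3 / 4) ^ i := by rw [mul_assoc, ← mul_pow]; norm_num
    _ ≤ 2 * ((7 / 8) ^ 2) ^ i := by gcongr; norm_num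
    _ = 2 * ((7 / 8) ^ i) ^ 2 := by rw [← pow_mul, ← pow_mul, mul_comm 2 i]

lemma succ_le_two_pow (k : ℕ) : (k : ℝ) + 1 ≤ 2 ^ k := by
  exact_mod_cast Nat.lt_two_pow_self

lemma sqrt_entropyExponent_le (hc : 0 ≤ c) (hL : 1 ≤ L) (N k : ℕ) :
    √((1 / 2) ^ k * (2 * entropyExponent c L N (k + 1) + k + 4)) ≤ √((4 * c + 24) * L) := by
  have h_exponent := entropyExponent_le_two_pow hc (by linarith) N (k + 1) (L := L)
  have h_linear : (k : ℝ) + 4 ≤ 24 * 2 ^ k * L := by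
    nlinarith [succ_le_two_pow k, one_le_pow₀ (M₀ := ℝ) one_le_two (n := k)]
  refine Real.sqrt_le_sqrt ?_
  rw [one_div_pow, one_div, inv_mul_le_iff₀ (by positivity)]
  rw [pow_succ] at h_exponent
  linarith

lemma sqrt_entropyExponent_add_le (hc : 0 ≤ c) (hL : 1 ≤ L) {N j : ℕ} (hN : (N : ℝ) ≤ 2 ^ j)
    (i : ℕ) :
    √((1 / 2) ^ (j + i) * (2 * entropyExponent c L N (j + i + 1) + (j + i : ℕ) + 4)) ≤
      √((4 * c + 24) * L) * (7 / 8) ^ i := by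
  have h_exponent := entropyExponent_add_le hc (by linarith) N j (i + 1) (L := L)
  have h_two : (2 : ℝ) ^ j ≤ 2 ^ j * L := le_mul_of_one_le_right (by positivity) hL
  have h_total : 2 * entropyExponent c L N (j + i + 1) + (j + i : ℕ) + 4 ≤
      (2 * c + 12) * L * (i + 1) * 2 ^ j := by
    have h_first : c * 2 ^ j * L ≤ c * 2 ^ j * L * (i + 1) :=
      le_mul_of_one_le_right (by positivity) (by linarith [Nat.cast_nonneg (α := ℝ) i])
    have h_dim : N * ((i : ℝ) + 1) ≤ 2 ^ j * L * (i + 1) := by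
      gcongr
      exact hN.trans h_two
    have h_index : ((j : ℝ) + 1) * (i + 1) ≤ 2 ^ j * L * (i + 1) := by
      gcongr
      exact (succ_le_two_pow j).trans h_two
    push_cast at h_exponent ⊢
    rw [← add_assoc] at h_exponent
    nlinarith [mul_nonneg (Nat.cast_nonneg (α := ℝ) i) (Nat.cast_nonneg (α := ℝ) j),
      Nat.cast_nonneg (α := ℝ) i, Nat.cast_nonneg (α := ℝ) j]
  calc _ ≤ √((4 * c + 24) * L * ((7 / 8) ^ i) ^ 2) := Real.sqrt_le_sqrt <| by
        calc _ ≤ (1 / 2 : ℝ) ^ (j + i) * ((2 * c + 12) * L * (i + 1) * 2 ^ j) := by gcongr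
          _ = (2 * c + 12) * L * ((i + 1) * (1 / 2) ^ i) := by
              rw [pow_add, one_div_pow, one_div_pow]
              field_simp
          _ ≤ (2 * c + 12) * L * (2 * ((7 / 8) ^ i) ^ 2) :=
              mul_le_mul_of_nonneg_left (succ_mul_half_pow_le i) (by positivity)
          _ = (4 * c + 24) * L * ((7 / 8) ^ i) ^ 2 := by ring
    _ = √((4 * c + 24) * L) * (7 / 8) ^ i := by
        rw [Real.sqrt_mul (by positivity), Real.sqrt_sq (by positivity)]

lemma one_le_logb_two_mul {x : ℝ} (hx : 1 ≤ x) : 1 ≤ Real.logb 2 (2 * x) := by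
  rw [Real.le_logb_iff_rpow_le one_lt_two (by positivity), Real.rpow_one]
  exact le_mul_of_one_le_right two_pos.le hx

lemma exists_le_two_pow_le_logb {N : ℕ} (hN : 1 ≤ N) :
    ∃ j : ℕ, (N : ℝ) ≤ 2 ^ j ∧ (j : ℝ) ≤ Real.logb 2 (2 * N) := by
  refine ⟨Nat.log 2 N + 1, by exact_mod_cast (Nat.lt_pow_succ_log_self one_lt_two N).le, ?_⟩
  rw [Real.le_logb_iff_rpow_le one_lt_two (by positivity), Real.rpow_natCast, pow_succ']
  exact_mod_cast Nat.mul_le_mul_left 2 (Nat.pow_log_le_self 2 (by omega))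

lemma sum_seven_eighths_pow_le (n : ℕ) : ∑ i ∈ range n, (7 / 8 : ℝ) ^ i ≤ 8 := by
  have : (0 : ℝ) ≤ (7 / 8) ^ n := by positivity
  rw [geom_sum_eq (by norm_num), div_le_iff_of_neg (by norm_num)]
  linarith

/-- The perceptron bound keeps each of the first `log (2N)` terms bounded, and the volumetric bound
makes the later ones decay geometrically. -/
theorem sum_sqrt_entropyExponent_le (hc : 0 ≤ c) (hL : 1 ≤ L) {N : ℕ} (hN : 1 ≤ N) (n : ℕ) :
    ∑ k ∈ range n, √((1 / 2) ^ k * (2 * entropyExponent c L N (k + 1) + k + 4)) ≤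
      9 * Real.logb 2 (2 * N) * √((4 * c + 24) * L) := by
  obtain ⟨j, hNj, hj⟩ := exists_le_two_pow_le_logb hN
  set R := √((4 * c + 24) * L)
  calc _ ≤ ∑ k ∈ range (j + n),
          √((1 / 2) ^ k * (2 * entropyExponent c L N (k + 1) + k + 4)) :=
        sum_le_sum_of_subset_of_nonneg (range_mono (Nat.le_add_left n j))
          fun _ _ _ => Real.sqrt_nonneg _
    _ ≤ ∑ _k ∈ range j, R + ∑ i ∈ range n, R * (7 / 8) ^ i := by
        rw [sum_range_add]
        exact add_le_add (sum_le_sum fun k _ => sqrt_entropyExponent_le hc hL N k)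
          (sum_le_sum fun i _ => sqrt_entropyExponent_add_le hc hL hNj i)
    _ = (j + ∑ i ∈ range n, (7 / 8) ^ i) * R := by
        rw [sum_const, card_range, nsmul_eq_mul, ← mul_sum]
        ring
    _ ≤ 9 * Real.logb 2 (2 * N) * R := by
        gcongr
        linarith [sum_seven_eighths_pow_le n, one_le_logb_two_mul (Nat.one_le_cast.2 hN)]

lemma sum_sqrt_mul_entropyExponent_add_le {N : ℕ} (hN : 1 ≤ N) (hL : 1 ≤ L) {a : ℝ} (ha : 0 ≤ a)
    (n : ℕ) :
    ∑ k ∈ range n,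
        √(64 * a * ((1 / 2) ^ k * (2 * entropyExponent (16 * 24 + 1) L N (k + 1) + k + 4))) +
      √(4 * a) ≤ 3000 * Real.logb 2 (2 * N) * √(a * L) := by
  set l := Real.logb 2 (2 * N)
  have hl : 1 ≤ l := one_le_logb_two_mul (Nat.one_le_cast.2 hN)
  have h_sum := sum_sqrt_entropyExponent_le (c := 16 * 24 + 1) (by norm_num) hL hN n
  have h_factor : ∀ x : ℝ, √(64 * a * x) = 8 * √a * √x := fun x => by
    rw [show 64 * a * x = 8 ^ 2 * a * x by ring, Real.sqrt_mul (by positivity),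
      Real.sqrt_mul (by norm_num), Real.sqrt_sq (by norm_num)]
  have h_last : √(4 * a) = 2 * √a := by
    rw [show 4 * a = 2 ^ 2 * a by ring, Real.sqrt_mul (by norm_num), Real.sqrt_sq (by norm_num)]
  have h_const : √((4 * (16 * 24 + 1) + 24) * L) ≤ 40 * √L := by
    rw [Real.sqrt_mul (by norm_num)]
    gcongr
    exact (Real.sqrt_le_left (by norm_num)).2 (by norm_num)
  have h_one : 1 ≤ l * √L := one_le_mul_of_one_le_of_one_le hl (Real.one_le_sqrt.2 hL)
  simp only [h_factor, h_last, ← mul_sum]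
  calc _ ≤ 8 * √a * (9 * l * (40 * √L)) + 2 * √a * (l * √L) := by
        refine add_le_add ?_ (le_mul_of_one_le_right (by positivity) h_one)
        gcongr
        exact h_sum.trans (by gcongr)
    _ = 2882 * (l * (√a * √L)) := by ring
    _ ≤ 3000 * (l * (√a * √L)) := by gcongr; norm_num
    _ = 3000 * l * √(a * L) := by rw [Real.sqrt_mul ha]; ring

end EntropySum

variable {ι E : Type*} [Fintype ι] [Nonempty ι] [NormedAddCommGroup E]
  [InnerProductSpace ℝ E] [FiniteDimensional ℝ E]

lemma one_le_log_two_mul_add_one {m : ℝ} (hm : 1 ≤ m) : 1 ≤ Real.log (2 * m + 1) := by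
  rw [Real.le_log_iff_exp_le (by positivity)]
  linarith [Real.exp_one_lt_d9]

theorem exists_bad_signs_sampleMap {κ : ι × Bool → E} {B : Set E} {p M H D : ℝ}
    (h_zero : 0 ∈ B) (hp : 1 ≤ p) (hp_two : p ≤ 2) (hM : 0 < M) (hH : 0 < H) (hD : 0 < D)
    (hE : 1 ≤ Module.finrank ℝ E) (hκ : ∀ j, ‖κ j‖ ≤ H) (hBM : ∀ v ∈ B, ‖sampleMap κ v‖ ≤ M)
    (hB : ∀ v ∈ B, ∀ w ∈ B, ∀ ε, 0 < ε → ‖sampleMap κ (v - w)‖ ≤ ε →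
      ‖v - w‖ ^ 2 * H ^ 2 ≤ 24 * ε ^ 2 * (M / ε) ^ p)
    {Y : (ι × Bool → ℝ) → ι × Bool → ℝ} (hY_zero : Y 0 = 0)
    (hY : IsSelfBounding (sampleMap κ '' B) Y p M D (2 * Fintype.card (ι × Bool))) :
    ∃ bad : Finset (ι → Bool), 4 * (#bad : ℝ) ≤ 2 ^ Fintype.card ι ∧
      ∀ e ∉ bad, ∀ v ∈ B, |selectionGap e (Y (sampleMap κ v))| ≤
        3000 * Real.logb 2 (2 * Module.finrank ℝ E) *
          √(D * Fintype.card (ι × Bool) * Real.log (2 * Fintype.card (ι × Bool) + 1)) := by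
  set n : ℝ := (Fintype.card (ι × Bool) : ℝ) with hn_def
  have hn_one : 1 ≤ n := by rw [hn_def]; exact_mod_cast Fintype.card_pos
  set L := Real.log (2 * n + 1)
  have hL : 1 ≤ L := one_le_log_two_mul_add_one hn_one
  choose P hP_zero hP hcard using
    exists_isInternalCover_dyadicRadius h_zero hp hM hH (by norm_num) hκ hBM hB
  obtain ⟨k₁, hk₁⟩ : ∃ k₁, Fintype.card (ι × Bool) ≤ 2 ^ k₁ := ⟨_, Nat.lt_two_pow_self.le⟩
  obtain ⟨bad, hbad, hgap⟩ := hY.exists_bad_signs_chaining (by linarith) hp_two hM hD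
    (by positivity) (hP_zero 0 rfl) hY_zero hP
    (entropyExponent_monotone (by norm_num) (by linarith) _) (by simp [entropyExponent]) hcard hk₁
  refine ⟨bad, hbad, fun e he v hv => (hgap e he _ ⟨v, hv, rfl⟩).trans ?_⟩
  rw [show 2 * D * (2 * n) = 4 * (D * n) by ring,
    show 32 * D * (2 * n) = 64 * (D * n) by ring]
  exact sum_sqrt_mul_entropyExponent_add_le hE hL (by positivity) k₁

/-! ## Regular Φ-functions -/

section Monotone

variable {u : ℝ → ℝ}

lemma measurable_comp_abs (hu : MonotoneOn u (Set.Ici 0)) : Measurable fun t : ℝ => u |t| := by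
  have h_mono : Monotone fun t : ℝ => u (max t 0) := fun s t hst =>
    hu (le_max_right s 0) (le_max_right t 0) (max_le_max_right 0 hst)
  have h_eq : (fun t : ℝ => u |t|) = (fun t => u (max t 0)) ∘ abs :=
    funext fun t => congrArg u (max_eq_left (abs_nonneg t)).symm
  exact h_eq ▸ h_mono.measurable.comp continuous_abs.measurable

lemma integrable_comp_abs {Ω : Type*} [MeasurableSpace Ω] {μ : Measure Ω} [IsFiniteMeasure μ]
    (hu : MonotoneOn u (Set.Ici 0)) {f : Ω → ℝ} (hf : Measurable f) {M : ℝ}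
    (hfM : ∀ x, |f x| ≤ M) : Integrable (fun x => u |f x|) μ := by
  refine .of_bound ((measurable_comp_abs hu).comp hf).aestronglyMeasurable (max |u 0| |u M|)
    (.of_forall fun x => ?_)
  have h_abs := abs_nonneg (f x)
  exact abs_le_max_abs_abs (hu Set.self_mem_Ici h_abs h_abs)
    (hu h_abs (h_abs.trans (hfM x)) (hfM x))

end Monotone

/-- An increasing function on `[0, ∞)` whose growth lies between the powers `p ≤ 2` and `q`: the
quotient by `t ^ p` is increasing up to the factor `A`, the quotient by `t ^ q` is decreasing. -/
structure IsRegularPhi (Ψ : ℝ → ℝ) (p A : ℝ) (q : ℕ) : Prop where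
  map_zero : Ψ 0 = 0
  nonneg : ∀ t, 0 ≤ t → 0 ≤ Ψ t
  monotoneOn : MonotoneOn Ψ (Set.Ici 0)
  mul_pow_le : ∀ s t, 0 < s → s ≤ t → Ψ t * s ^ q ≤ Ψ s * t ^ q
  mul_rpow_le : ∀ s t, 0 < s → s ≤ t → Ψ s * t ^ p ≤ A * Ψ t * s ^ p
  one_pos : 0 < Ψ 1
  one_le_const : 1 ≤ A
  one_lt : 1 < p
  le_two : p ≤ 2
  two_le : 2 ≤ q

lemma isRegularPhi_sq : IsRegularPhi (fun t => t ^ 2) 2 1 2 where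
  map_zero := by norm_num
  nonneg t _ := sq_nonneg t
  monotoneOn _ hs _ _ hst := pow_le_pow_left₀ hs hst 2
  mul_pow_le s t _ _ := (mul_comm _ _).le
  mul_rpow_le s t _ _ := by rw [Real.rpow_two, Real.rpow_two, one_mul, mul_comm]
  one_pos := by norm_num
  one_le_const := le_rfl
  one_lt := one_lt_two
  le_two := le_rfl
  two_le := le_rfl

/-- The constant in `t ^ p ≤ growthConst Ψ A * (1 + Ψ t)`, hence in the comparison of the unit balls
of `L^p` and of the class of `Ψ`. -/
def growthConst (Ψ : ℝ → ℝ) (A : ℝ) : ℝ := 1 + A / Ψ 1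

namespace IsRegularPhi

variable {Ψ : ℝ → ℝ} {p A : ℝ} {q : ℕ}

lemma one_lt_growthConst (h : IsRegularPhi Ψ p A q) : 1 < growthConst Ψ A :=
  lt_add_of_pos_right 1 (div_pos (by linarith [h.one_le_const]) h.one_pos)

lemma rpow_le_div_mul (h : IsRegularPhi Ψ p A q) {t : ℝ} (ht : 1 ≤ t) :
    t ^ p ≤ A / Ψ 1 * Ψ t := by
  have := h.mul_rpow_le 1 t zero_lt_one ht
  rw [Real.one_rpow, mul_one] at this
  rw [div_mul_eq_mul_div, le_div_iff₀ h.one_pos]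
  linarith

lemma rpow_le (h : IsRegularPhi Ψ p A q) {t : ℝ} (ht : 0 ≤ t) : t ^ p ≤ 1 + A / Ψ 1 * Ψ t := by
  have h_ratio : 0 ≤ A / Ψ 1 := div_nonneg (by linarith [h.one_le_const]) h.one_pos.le
  rcases le_total t 1 with h_one | h_one
  · have : t ^ p ≤ 1 := Real.rpow_le_one ht h_one (by linarith [h.one_lt])
    linarith [mul_nonneg h_ratio (h.nonneg t ht)]
  · linarith [h.rpow_le_div_mul h_one]

lemma sub_le_mul_div (h : IsRegularPhi Ψ p A q) {s t : ℝ} (hs : 0 ≤ s) (hst : s ≤ t) (ht : 0 < t) :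
    Ψ t - Ψ s ≤ q * Ψ t * ((t - s) / t) := by
  have hΨt := h.nonneg t ht.le
  rw [sub_div, div_self ht.ne']
  rcases hs.eq_or_lt with rfl | hs_pos
  · have : (1 : ℝ) ≤ q := by exact_mod_cast one_le_two.trans h.two_le
    rw [h.map_zero, zero_div]
    nlinarith
  have h_bernoulli : 1 + (q : ℝ) * (s / t - 1) ≤ (s / t) ^ q := by
    have := one_add_mul_le_pow (a := s / t - 1) (by linarith [div_nonneg hs ht.le]) q
    rwa [add_sub_cancel] at this
  have h_dec : Ψ t * (s / t) ^ q ≤ Ψ s := by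
    rw [div_pow, ← mul_div_assoc, div_le_iff₀ (by positivity)]
    exact h.mul_pow_le s t hs_pos hst
  nlinarith [mul_le_mul_of_nonneg_left h_bernoulli hΨt]

lemma mul_div_rpow_le (h : IsRegularPhi Ψ p A q) {t M d : ℝ} (ht : 0 < t) (htM : t ≤ M)
    (hd : 0 ≤ d) : Ψ t * (d / t) ^ p ≤ A * Ψ M * (d / M) ^ p := by
  have hM : 0 < M := ht.trans_le htM
  rw [Real.div_rpow hd ht.le, Real.div_rpow hd hM.le, ← mul_div_assoc, ← mul_div_assoc,
    div_le_div_iff₀ (by positivity) (by positivity), mul_right_comm, mul_right_comm (A * Ψ M)]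
  exact mul_le_mul_of_nonneg_right (h.mul_rpow_le t M ht htM) (Real.rpow_nonneg hd p)

/-- The increments are at most `q * Ψ t` times the relative distance, whose square is at most its
`p`-th power because `p ≤ 2`. -/
lemma sub_sq_le (h : IsRegularPhi Ψ p A q) {s t M : ℝ} (hs : 0 ≤ s) (hst : s ≤ t) (htM : t ≤ M)
    (hM : 0 < M) : (Ψ t - Ψ s) ^ 2 ≤ q ^ 2 * A * Ψ M * ((t - s) / M) ^ p * Ψ t := by
  have hA := h.one_le_const
  have hΨM := h.nonneg M hM.le
  have hΨt := h.nonneg t (hs.trans hst)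
  rcases hst.eq_or_lt with rfl | hlt
  · rw [sub_self, sub_self, zero_div, zero_pow two_ne_zero]
    positivity
  have ht : 0 < t := hs.trans_lt hlt
  have h_pow : ((t - s) / t) ^ 2 ≤ ((t - s) / t) ^ p := by
    rw [← Real.rpow_two]
    exact Real.rpow_le_rpow_of_exponent_ge (div_pos (by linarith) ht)
      ((div_le_one ht).2 (by linarith)) h.le_two
  calc (Ψ t - Ψ s) ^ 2 ≤ (q * Ψ t * ((t - s) / t)) ^ 2 :=
        pow_le_pow_left₀ (sub_nonneg.2 (h.monotoneOn hs ht.le hst)) (h.sub_le_mul_div hs hst ht) 2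
    _ = q ^ 2 * Ψ t * (Ψ t * ((t - s) / t) ^ 2) := by ring
    _ ≤ q ^ 2 * Ψ t * (Ψ t * ((t - s) / t) ^ p) := by gcongr
    _ ≤ q ^ 2 * Ψ t * (A * Ψ M * ((t - s) / M) ^ p) :=
        mul_le_mul_of_nonneg_left (h.mul_div_rpow_le ht htM (sub_nonneg.2 hst)) (by positivity)
    _ = q ^ 2 * A * Ψ M * ((t - s) / M) ^ p * Ψ t := by ring

lemma sub_abs_sq_le (h : IsRegularPhi Ψ p A q) {x y M δ : ℝ} (hx : |x| ≤ M) (hy : |y| ≤ M)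
    (hM : 0 < M) (hδ : |x - y| ≤ δ) :
    (Ψ |x| - Ψ |y|) ^ 2 ≤ q ^ 2 * A * Ψ M * (δ / M) ^ p * (Ψ |x| + Ψ |y|) := by
  wlog hyx : |y| ≤ |x| generalizing x y
  · rw [sub_sq_comm, add_comm]
    exact this hy hx (abs_sub_comm x y ▸ hδ) (le_of_not_ge hyx)
  have hA := h.one_le_const
  have hΨM := h.nonneg M hM.le
  have hΨx := h.nonneg _ (abs_nonneg x)
  have hΨy := h.nonneg _ (abs_nonneg y)
  have hp : 0 ≤ p := by linarith [h.one_lt]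
  refine (h.sub_sq_le (abs_nonneg y) hyx hx hM).trans ?_
  have : 0 ≤ (|x| - |y|) / M := div_nonneg (sub_nonneg.2 hyx) hM.le
  have hδ_nonneg : 0 ≤ δ := (abs_nonneg _).trans hδ
  gcongr
  · exact (abs_sub_abs_le_abs_sub x y).trans hδ
  · exact le_add_of_nonneg_right hΨy

lemma apply_div_le (h : IsRegularPhi Ψ p A q) {t c : ℝ} (ht : 0 ≤ t) (hc : 1 ≤ c) :
    Ψ (t / (A * c)) ≤ Ψ t / c := by
  have hA := h.one_le_const
  rcases ht.eq_or_lt with rfl | ht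
  · simp only [zero_div, h.map_zero, le_refl]
  have hAc : 1 ≤ A * c := one_le_mul_of_one_le_of_one_le hA hc
  have hΨ := h.nonneg t ht.le
  have h_inc := h.mul_rpow_le (t / (A * c)) t (by positivity) (div_le_self ht.le hAc)
  rw [Real.div_rpow ht.le (by positivity), ← mul_div_assoc, mul_div_right_comm] at h_inc
  have h_rpow : A * c ≤ (A * c) ^ p := Real.self_le_rpow_of_one_le hAc h.one_lt.le
  calc Ψ (t / (A * c)) ≤ A * Ψ t / (A * c) ^ p := le_of_mul_le_mul_right h_inc (by positivity)
    _ ≤ A * Ψ t / (A * c) := by gcongr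
    _ = Ψ t / c := mul_div_mul_left _ _ (by positivity)

end IsRegularPhi

/-- The least majorant of `Φ` on `[T, ∞)` among the increasing functions `Ψ` with `Ψ t / t ^ q`
decreasing on `(0, ∞)`. -/
def phiEnvelope (Φ : ℝ → ℝ) (T : ℝ) (q : ℕ) (t : ℝ) : ℝ :=
  ⨆ s : Set.Ici T, Φ s * min 1 ((t / s) ^ q)

/-- `Φ` is nonnegative and increasing, and `Φ t / t ^ q` decreases on `[T, ∞)` up to the
factor `b`. -/
structure HasPowGrowthAbove (Φ : ℝ → ℝ) (b T : ℝ) (q : ℕ) : Prop where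
  nonneg : ∀ t, 0 ≤ t → 0 ≤ Φ t
  monotoneOn : MonotoneOn Φ (Set.Ici 0)
  mul_pow_le : ∀ s t, T ≤ s → s ≤ t → Φ t * s ^ q ≤ b * Φ s * t ^ q
  threshold_pos : 0 < T
  one_le_const : 1 ≤ b

namespace HasPowGrowthAbove

variable {Φ : ℝ → ℝ} {b T : ℝ} {q : ℕ}

lemma pos (h : HasPowGrowthAbove Φ b T q) (s : Set.Ici T) : 0 < (s : ℝ) :=
  h.threshold_pos.trans_le s.2

lemma nonneg_apply (h : HasPowGrowthAbove Φ b T q) (s : Set.Ici T) : 0 ≤ Φ s :=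
  h.nonneg s (h.pos s).le

lemma mul_min_le (h : HasPowGrowthAbove Φ b T q) {t : ℝ} (ht : 0 ≤ t) (s : Set.Ici T) :
    Φ s * min 1 ((t / s) ^ q) ≤ b * Φ (max t T) := by
  have hs := h.pos s
  have hΦs := h.nonneg_apply s
  have h_max : T ≤ max t T := le_max_right t T
  have hΦ_max := h.nonneg _ (h.threshold_pos.le.trans h_max)
  rcases le_total (s : ℝ) (max t T) with hst | hst
  · calc Φ s * min 1 ((t / s) ^ q) ≤ Φ s :=
          mul_le_of_le_one_right hΦs (min_le_left _ _)
      _ ≤ Φ (max t T) := h.monotoneOn hs.le (hs.le.trans hst) hst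
      _ ≤ b * Φ (max t T) := le_mul_of_one_le_left hΦ_max h.one_le_const
  · calc Φ s * min 1 ((t / s) ^ q) ≤ Φ s * (max t T / s) ^ q := by
          gcongr
          exact (min_le_right _ _).trans (by gcongr; exact le_max_left t T)
      _ ≤ b * Φ (max t T) := by
          rw [div_pow, ← mul_div_assoc, div_le_iff₀ (by positivity)]
          exact h.mul_pow_le _ _ h_max hst

lemma bddAbove (h : HasPowGrowthAbove Φ b T q) {t : ℝ} (ht : 0 ≤ t) :
    BddAbove (Set.range fun s : Set.Ici T => Φ s * min 1 ((t / s) ^ q)) :=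
  ⟨b * Φ (max t T), Set.forall_mem_range.2 (h.mul_min_le ht)⟩

lemma le_phiEnvelope (h : HasPowGrowthAbove Φ b T q) {t : ℝ} (ht : 0 ≤ t) (s : Set.Ici T) :
    Φ s * min 1 ((t / s) ^ q) ≤ phiEnvelope Φ T q t :=
  le_ciSup (h.bddAbove ht) s

lemma self_le_phiEnvelope (h : HasPowGrowthAbove Φ b T q) {t : ℝ} (ht : T ≤ t) :
    Φ t ≤ phiEnvelope Φ T q t := by
  have ht_pos := h.threshold_pos.trans_le ht
  simpa [div_self ht_pos.ne'] using h.le_phiEnvelope ht_pos.le ⟨t, ht⟩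

lemma phiEnvelope_le (h : HasPowGrowthAbove Φ b T q) {t : ℝ} (ht : T ≤ t) :
    phiEnvelope Φ T q t ≤ b * Φ t := by
  exact (ciSup_le (h.mul_min_le (h.threshold_pos.le.trans ht))).trans_eq (by rw [max_eq_left ht])

lemma phiEnvelope_nonneg (h : HasPowGrowthAbove Φ b T q) {t : ℝ} (ht : 0 ≤ t) :
    0 ≤ phiEnvelope Φ T q t := by
  have := h.threshold_pos
  exact (mul_nonneg (h.nonneg_apply ⟨T, Set.self_mem_Ici⟩) (by positivity)).trans
    (h.le_phiEnvelope ht ⟨T, Set.self_mem_Ici⟩)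

lemma phiEnvelope_monotoneOn (h : HasPowGrowthAbove Φ b T q) :
    MonotoneOn (phiEnvelope Φ T q) (Set.Ici 0) := by
  intro s hs t ht hst
  have hs : 0 ≤ s := hs
  refine ciSup_mono (h.bddAbove ht) fun r => ?_
  have := h.pos r
  have := h.nonneg_apply r
  gcongr

lemma phiEnvelope_mul_pow_le (h : HasPowGrowthAbove Φ b T q) {s t : ℝ} (hs : 0 < s) (hst : s ≤ t) :
    phiEnvelope Φ T q t * s ^ q ≤ phiEnvelope Φ T q s * t ^ q := by
  have ht := hs.trans_le hst
  rw [← le_div_iff₀ (by positivity)]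
  refine ciSup_le fun r => ?_
  rw [le_div_iff₀ (by positivity)]
  refine le_trans ?_ (mul_le_mul_of_nonneg_right (h.le_phiEnvelope hs.le r) (by positivity))
  rw [mul_assoc, mul_assoc, min_mul_of_nonneg _ _ (by positivity),
    min_mul_of_nonneg _ _ (by positivity), one_mul, one_mul]
  refine mul_le_mul_of_nonneg_left (min_le_min (by gcongr) (le_of_eq ?_)) (h.nonneg_apply r)
  rw [div_pow, div_pow]
  ring

lemma phiEnvelope_mul_rpow_le_of_le (h : HasPowGrowthAbove Φ b T q) {p s t : ℝ} (hpq : p ≤ q)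
    (hs : 0 < s) (hst : s ≤ t) (htT : t ≤ T) :
    phiEnvelope Φ T q s * t ^ p ≤ phiEnvelope Φ T q t * s ^ p := by
  have ht := hs.trans_le hst
  have h_nonneg := h.phiEnvelope_nonneg ht.le
  have h_pow : phiEnvelope Φ T q s ≤ phiEnvelope Φ T q t * (s / t) ^ q := by
    refine ciSup_le fun r => ?_
    have hr := h.pos r
    have htr : (t / r) ^ q ≤ 1 := pow_le_one₀ (by positivity) ((div_le_one hr).2 (htT.trans r.2))
    calc Φ r * min 1 ((s / r) ^ q) ≤ Φ r * (s / r) ^ q :=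
          mul_le_mul_of_nonneg_left (min_le_right _ _) (h.nonneg_apply r)
      _ = Φ r * min 1 ((t / r) ^ q) * (s / t) ^ q := by
          rw [min_eq_right htr, mul_assoc, ← mul_pow, mul_comm (t / (r : ℝ)),
            div_mul_div_cancel₀ ht.ne']
      _ ≤ phiEnvelope Φ T q t * (s / t) ^ q := by
          gcongr
          exact h.le_phiEnvelope ht.le r
  have h_rpow : phiEnvelope Φ T q s ≤ phiEnvelope Φ T q t * (s / t) ^ p := by
    refine h_pow.trans ?_
    rw [← Real.rpow_natCast]
    gcongr phiEnvelope Φ T q t * ?_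
    exact Real.rpow_le_rpow_of_exponent_ge (by positivity) ((div_le_one ht).2 hst) hpq
  rwa [Real.div_rpow hs.le ht.le, ← mul_div_assoc, le_div_iff₀ (by positivity)] at h_rpow

lemma phiEnvelope_mul_rpow_le_of_ge (h : HasPowGrowthAbove Φ b T q) {p a s t : ℝ} (ha : 0 ≤ a)
    (hΦ : Φ s * t ^ p ≤ a * Φ t * s ^ p) (hs : T ≤ s) (hst : s ≤ t) :
    phiEnvelope Φ T q s * t ^ p ≤ a * b * phiEnvelope Φ T q t * s ^ p := by
  have hs_pos := h.threshold_pos.trans_le hs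
  have ht_pos := hs_pos.trans_le hst
  have hb := h.one_le_const
  calc phiEnvelope Φ T q s * t ^ p ≤ b * Φ s * t ^ p := by gcongr; exact h.phiEnvelope_le hs
    _ = b * (Φ s * t ^ p) := mul_assoc _ _ _
    _ ≤ b * (a * Φ t * s ^ p) := by gcongr
    _ = a * b * Φ t * s ^ p := by ring
    _ ≤ a * b * phiEnvelope Φ T q t * s ^ p := by
        gcongr
        exact h.self_le_phiEnvelope (hs.trans hst)

lemma phiEnvelope_mul_rpow_le (h : HasPowGrowthAbove Φ b T q) {p a s t : ℝ} (hpq : p ≤ q)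
    (ha : 1 ≤ a) (hΦ : ∀ s t, T ≤ s → s ≤ t → Φ s * t ^ p ≤ a * Φ t * s ^ p) (hs : 0 < s)
    (hst : s ≤ t) : phiEnvelope Φ T q s * t ^ p ≤ a * b * phiEnvelope Φ T q t * s ^ p := by
  have ht := hs.trans_le hst
  have hT := h.threshold_pos
  have hab : 1 ≤ a * b := one_le_mul_of_one_le_of_one_le ha h.one_le_const
  have h_nonneg := h.phiEnvelope_nonneg ht.le
  rcases le_total T s with hTs | hsT
  · exact h.phiEnvelope_mul_rpow_le_of_ge (by linarith) (hΦ s t hTs hst) hTs hst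
  rcases le_total t T with htT | hTt
  · refine (h.phiEnvelope_mul_rpow_le_of_le hpq hs hst htT).trans ?_
    gcongr
    exact le_mul_of_one_le_left h_nonneg hab
  · refine le_of_mul_le_mul_right ?_ (by positivity : 0 < T ^ p)
    have h_low := h.phiEnvelope_mul_rpow_le_of_le hpq hs hsT le_rfl
    have h_high := h.phiEnvelope_mul_rpow_le_of_ge (by linarith) (hΦ T t le_rfl hTt) le_rfl hTt
    calc phiEnvelope Φ T q s * t ^ p * T ^ p = phiEnvelope Φ T q s * T ^ p * t ^ p :=
          mul_right_comm _ _ _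
      _ ≤ phiEnvelope Φ T q T * s ^ p * t ^ p := by gcongr
      _ = phiEnvelope Φ T q T * t ^ p * s ^ p := mul_right_comm _ _ _
      _ ≤ a * b * phiEnvelope Φ T q t * T ^ p * s ^ p := by gcongr
      _ = a * b * phiEnvelope Φ T q t * s ^ p * T ^ p := mul_right_comm _ _ _

theorem isRegularPhi_phiEnvelope (h : HasPowGrowthAbove Φ b T q) {p a : ℝ} (hp : 1 < p)
    (hp_two : p ≤ 2) (hq : 2 ≤ q) (ha : 1 ≤ a) (hΦT : 0 < Φ T)
    (hΦ : ∀ s t, T ≤ s → s ≤ t → Φ s * t ^ p ≤ a * Φ t * s ^ p) :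
    IsRegularPhi (phiEnvelope Φ T q) p (a * b) q where
  map_zero := by
    simp only [phiEnvelope, zero_div, zero_pow (by omega : q ≠ 0), min_eq_right zero_le_one,
      mul_zero, Real.iSup_const_zero]
  nonneg _ ht := h.phiEnvelope_nonneg ht
  monotoneOn := h.phiEnvelope_monotoneOn
  mul_pow_le _ _ := h.phiEnvelope_mul_pow_le
  mul_rpow_le _ _ :=
    h.phiEnvelope_mul_rpow_le (hp_two.trans (by exact_mod_cast hq)) ha hΦ
  one_pos := by
    have := h.threshold_pos
    refine lt_of_lt_of_le ?_ (h.le_phiEnvelope zero_le_one ⟨T, Set.self_mem_Ici⟩)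
    exact mul_pos hΦT (lt_min zero_lt_one (by positivity))
  one_le_const := one_le_mul_of_one_le_of_one_le ha h.one_le_const
  one_lt := hp
  le_two := hp_two
  two_le := hq

end HasPowGrowthAbove

/-! ## Parseval frames -/

lemma sq_le_rpow_mul_abs_rpow {p a δ : ℝ} (hp : 0 ≤ p) (hp_two : p ≤ 2) (ha : |a| ≤ δ) :
    a ^ 2 ≤ δ ^ (2 - p) * |a| ^ p := by
  have h_split : |a| ^ 2 = |a| ^ (2 - p) * |a| ^ p := by
    rw [← Real.rpow_add_of_nonneg (abs_nonneg a) (sub_nonneg.2 hp_two) hp, sub_add_cancel,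
      Real.rpow_two]
  rw [← sq_abs, h_split]
  have := sub_nonneg.2 hp_two
  gcongr

lemma abs_sub_rpow_le {p : ℝ} (hp : 0 ≤ p) (hp_two : p ≤ 2) (a b : ℝ) :
    |a - b| ^ p ≤ 4 * (|a| ^ p + |b| ^ p) := by
  wlog hab : |b| ≤ |a| generalizing a b
  · rw [abs_sub_comm, add_comm]
    exact this b a (le_of_not_ge hab)
  have h_two : (2 : ℝ) ^ p ≤ 4 :=
    (Real.rpow_le_rpow_of_exponent_le one_le_two hp_two).trans_eq (by norm_num)
  calc |a - b| ^ p ≤ (2 * |a|) ^ p := by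
        gcongr
        linarith [abs_sub a b]
    _ = 2 ^ p * |a| ^ p := Real.mul_rpow zero_le_two (abs_nonneg a)
    _ ≤ 4 * (|a| ^ p + |b| ^ p) := by
        gcongr
        exact le_add_of_nonneg_right (by positivity)

section Frame

variable {Ω E : Type*} [MeasurableSpace Ω] [NormedAddCommGroup E] [InnerProductSpace ℝ E]

/-- A measurable family of vectors of norm at most `H` satisfying Parseval's identity; it represents
the vectors of `E` isometrically as the functions `x ↦ ⟪κ x, v⟫` in `L²(μ)`. -/
structure IsBoundedParsevalFrame (μ : Measure Ω) (κ : Ω → E) (H : ℝ) : Prop where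
  norm_le : ∀ x, ‖κ x‖ ≤ H
  measurable_inner : ∀ v, Measurable fun x => ⟪κ x, v⟫
  integral_sq : ∀ v, ∫ x, ⟪κ x, v⟫ ^ 2 ∂μ = ‖v‖ ^ 2

/-- The modular `∫ Ψ(|f|) dμ` of the function `f` represented by `v`. -/
def modular (μ : Measure Ω) (κ : Ω → E) (Ψ : ℝ → ℝ) (v : E) : ℝ := ∫ x, Ψ |⟪κ x, v⟫| ∂μ

/-- A bound for `|f|` over the functions `f` with modular at most one. -/
def amplitude (Ψ : ℝ → ℝ) (p A H : ℝ) : ℝ := (growthConst Ψ A * H ^ 2) ^ p⁻¹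

namespace IsRegularPhi

variable {Ψ : ℝ → ℝ} {p A H : ℝ} {q : ℕ}

lemma amplitude_pos (hΨ : IsRegularPhi Ψ p A q) (hH : 0 < H) : 0 < amplitude Ψ p A H := by
  have := hΨ.one_lt_growthConst
  unfold amplitude
  positivity

lemma amplitude_rpow (hΨ : IsRegularPhi Ψ p A q) (H : ℝ) :
    amplitude Ψ p A H ^ p = growthConst Ψ A * H ^ 2 := by
  have := hΨ.one_lt_growthConst
  exact Real.rpow_inv_rpow (by positivity) (by linarith [hΨ.one_lt])

lemma sq_le_amplitude_rpow (hΨ : IsRegularPhi Ψ p A q) (H : ℝ) :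
    H ^ 2 ≤ amplitude Ψ p A H ^ p := by
  rw [hΨ.amplitude_rpow]
  exact le_mul_of_one_le_left (sq_nonneg H) hΨ.one_lt_growthConst.le

lemma one_le_amplitude (hΨ : IsRegularPhi Ψ p A q) (hH : 1 ≤ H) : 1 ≤ amplitude Ψ p A H := by
  have h_pos := hΨ.amplitude_pos (zero_lt_one.trans_le hH)
  rw [← Real.rpow_le_rpow_iff zero_le_one h_pos.le (zero_lt_one.trans hΨ.one_lt), Real.one_rpow]
  exact (one_le_pow₀ hH).trans (hΨ.sq_le_amplitude_rpow H)

lemma sq_le_mul_apply_amplitude (hΨ : IsRegularPhi Ψ p A q) (hH : 1 ≤ H) :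
    H ^ 2 ≤ A / Ψ 1 * Ψ (amplitude Ψ p A H) :=
  (hΨ.sq_le_amplitude_rpow H).trans (hΨ.rpow_le_div_mul (hΨ.one_le_amplitude hH))

end IsRegularPhi

namespace IsBoundedParsevalFrame

variable {μ : Measure Ω} {κ : Ω → E} {H : ℝ} {Ψ : ℝ → ℝ} {p A : ℝ} {q : ℕ}

lemma abs_inner_le (hF : IsBoundedParsevalFrame μ κ H) (v : E) (x : Ω) : |⟪κ x, v⟫| ≤ H * ‖v‖ :=
  (abs_real_inner_le_norm _ _).trans (mul_le_mul_of_nonneg_right (hF.norm_le x) (norm_nonneg v))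

lemma modular_sq (hF : IsBoundedParsevalFrame μ κ H) (v : E) :
    modular μ κ (fun t => t ^ 2) v = ‖v‖ ^ 2 := by
  simp only [modular, sq_abs, hF.integral_sq]

lemma integrable (hF : IsBoundedParsevalFrame μ κ H) [IsFiniteMeasure μ]
    (hΨ : IsRegularPhi Ψ p A q) (v : E) : Integrable (fun x => Ψ |⟪κ x, v⟫|) μ :=
  integrable_comp_abs hΨ.monotoneOn (hF.measurable_inner v) (hF.abs_inner_le v)

variable [IsProbabilityMeasure μ]

lemma norm_sq_le (hF : IsBoundedParsevalFrame μ κ H) (hΨ : IsRegularPhi Ψ p A q) (hH : 0 ≤ H)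
    {v : E} (hv : modular μ κ Ψ v ≤ 1) : ‖v‖ ^ 2 ≤ (H * ‖v‖) ^ (2 - p) * growthConst Ψ A := by
  have h_ratio : 0 ≤ A / Ψ 1 := div_nonneg (by linarith [hΨ.one_le_const]) hΨ.one_pos.le
  have h_int := (hF.integrable hΨ v).const_mul (A / Ψ 1)
  calc ‖v‖ ^ 2 = ∫ x, ⟪κ x, v⟫ ^ 2 ∂μ := (hF.integral_sq v).symm
    _ ≤ ∫ x, (H * ‖v‖) ^ (2 - p) * (1 + A / Ψ 1 * Ψ |⟪κ x, v⟫|) ∂μ := by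
        refine integral_mono_of_nonneg (.of_forall fun x => sq_nonneg _)
          (((integrable_const 1).add h_int).const_mul _) (.of_forall fun x => ?_)
        refine (sq_le_rpow_mul_abs_rpow (by linarith [hΨ.one_lt]) hΨ.le_two
          (hF.abs_inner_le v x)).trans ?_
        exact mul_le_mul_of_nonneg_left (hΨ.rpow_le (abs_nonneg _)) (by positivity)
    _ = (H * ‖v‖) ^ (2 - p) * (1 + A / Ψ 1 * modular μ κ Ψ v) := by
        rw [integral_const_mul, integral_add (integrable_const 1) h_int, integral_const_mul,
          integral_const, probReal_univ, one_smul, modular]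
    _ ≤ (H * ‖v‖) ^ (2 - p) * growthConst Ψ A := by
        unfold growthConst
        gcongr
        exact mul_le_of_le_one_right h_ratio hv

lemma mul_norm_le_amplitude (hF : IsBoundedParsevalFrame μ κ H) (hΨ : IsRegularPhi Ψ p A q)
    (hH : 0 < H) {v : E} (hv : modular μ κ Ψ v ≤ 1) : H * ‖v‖ ≤ amplitude Ψ p A H := by
  have h_pos := hΨ.amplitude_pos hH
  rcases eq_or_ne v 0 with rfl | hv_ne
  · rw [norm_zero, mul_zero]
    exact h_pos.le
  have hHv : 0 < H * ‖v‖ := mul_pos hH (norm_pos_iff.2 hv_ne)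
  rw [← Real.rpow_le_rpow_iff hHv.le h_pos.le (zero_lt_one.trans hΨ.one_lt), hΨ.amplitude_rpow]
  refine le_of_mul_le_mul_left ?_ (Real.rpow_pos_of_pos hHv (2 - p))
  calc (H * ‖v‖) ^ (2 - p) * (H * ‖v‖) ^ p = ‖v‖ ^ 2 * H ^ 2 := by
        rw [← Real.rpow_add hHv, sub_add_cancel, Real.rpow_two, mul_pow, mul_comm]
    _ ≤ (H * ‖v‖) ^ (2 - p) * growthConst Ψ A * H ^ 2 := by
        gcongr
        exact hF.norm_sq_le hΨ hH.le hv
    _ = (H * ‖v‖) ^ (2 - p) * (growthConst Ψ A * H ^ 2) := mul_assoc _ _ _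

lemma abs_inner_le_amplitude (hF : IsBoundedParsevalFrame μ κ H) (hΨ : IsRegularPhi Ψ p A q)
    (hH : 0 < H) {v : E} (hv : modular μ κ Ψ v ≤ 1) (x : Ω) : |⟪κ x, v⟫| ≤ amplitude Ψ p A H :=
  (hF.abs_inner_le v x).trans (hF.mul_norm_le_amplitude hΨ hH hv)

lemma finrank_le [FiniteDimensional ℝ E] (hF : IsBoundedParsevalFrame μ κ H) :
    (Module.finrank ℝ E : ℝ) ≤ H ^ 2 := by
  let b := stdOrthonormalBasis ℝ E
  have h_int (v : E) : Integrable (fun x => ⟪κ x, v⟫ ^ 2) μ := by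
    simpa only [sq_abs] using hF.integrable isRegularPhi_sq v
  calc (Module.finrank ℝ E : ℝ) = ∑ i, ∫ x, ⟪κ x, b i⟫ ^ 2 ∂μ := by
        simp [hF.integral_sq]
    _ = ∫ x, ∑ i, ⟪κ x, b i⟫ ^ 2 ∂μ := (integral_finsetSum _ fun i _ => h_int _).symm
    _ ≤ ∫ _, H ^ 2 ∂μ := by
        refine integral_mono (integrable_finsetSum _ fun i _ => h_int _) (integrable_const _) ?_
        intro x
        have h_parseval := b.sum_sq_norm_inner_left (κ x)
        simp only [Real.norm_eq_abs, sq_abs] at h_parseval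
        exact h_parseval.trans_le (pow_le_pow_left₀ (norm_nonneg _) (hF.norm_le x) 2)
    _ = H ^ 2 := by rw [integral_const, probReal_univ, one_smul]

end IsBoundedParsevalFrame

end Frame

/-! ## Halving a sample -/

section Sample

variable {Ω E ι : Type*} [MeasurableSpace Ω] [NormedAddCommGroup E] [InnerProductSpace ℝ E]
  [Fintype ι]

/-- The modular of the function represented by `v` with respect to the uniform probability measure
on the sample `x`. -/
def sampleModular (κ : Ω → E) (Ψ : ℝ → ℝ) (x : ι → Ω) (v : E) : ℝ :=
  (∑ i, Ψ |⟪κ (x i), v⟫|) / Fintype.card ι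

/-- The sample `x` reproduces the modular on its unit ball up to an additive error `t`. -/
def IsApproxSample (μ : Measure Ω) (κ : Ω → E) (Ψ : ℝ → ℝ) (x : ι → Ω) (t : ℝ) : Prop :=
  ∀ v, modular μ κ Ψ v ≤ 1 → |sampleModular κ Ψ x v - modular μ κ Ψ v| ≤ t

/-- The sample `x` reproduces both the modular of `Ψ` and the squared norm of `E`. Control of the
latter is what makes the halving of `x` possible. -/
structure IsFaithfulSample (μ : Measure Ω) (κ : Ω → E) (Ψ : ℝ → ℝ) (x : ι → Ω) (t : ℝ) : Prop where
  isApproxSample : IsApproxSample μ κ Ψ x t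
  isApproxSample_sq : IsApproxSample μ κ (fun s => s ^ 2) x t

/-- The error made by halving a sample of size `n`, for a class of dimension `N` whose increments
are controlled by `D`. -/
def halvingError (D : ℝ) (N : ℕ) (n : ℝ) : ℝ :=
  3000 * Real.logb 2 (2 * N) * √(D * n * Real.log (2 * n + 1)) / n

namespace IsApproxSample

variable {μ : Measure Ω} {κ : Ω → E} {Ψ : ℝ → ℝ} {x : ι → Ω} {t : ℝ}

lemma mono {t' : ℝ} (hx : IsApproxSample μ κ Ψ x t) (htt' : t ≤ t') :
    IsApproxSample μ κ Ψ x t' :=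
  fun v hv => (hx v hv).trans htt'

lemma comp_equiv {ι' : Type*} [Fintype ι'] (hx : IsApproxSample μ κ Ψ x t) (e : ι' ≃ ι) :
    IsApproxSample μ κ Ψ (x ∘ e) t := by
  intro v hv
  have h_sum : sampleModular κ Ψ (x ∘ e) v = sampleModular κ Ψ x v := by
    rw [sampleModular, sampleModular, Fintype.card_congr e,
      ← Equiv.sum_comp e fun i => Ψ |⟪κ (x i), v⟫|]
    rfl
  exact h_sum ▸ hx v hv

lemma select {x : ι × Bool → Ω} (hx : IsApproxSample μ κ Ψ x t) {e : ι → Bool} {Δ : ℝ}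
    (he : ∀ v, modular μ κ Ψ v ≤ 1 → |selectionGap e (fun j => Ψ |⟪κ (x j), v⟫|)| ≤ Δ) :
    IsApproxSample μ κ Ψ (fun i => x (i, e i)) (t + Δ / Fintype.card (ι × Bool)) := by
  intro v hv
  have hcard : (Fintype.card (ι × Bool) : ℝ) = 2 * Fintype.card ι := by
    rw [Fintype.card_prod, Fintype.card_bool, Nat.cast_mul, Nat.cast_two, mul_comm]
  have h_split : sampleModular κ Ψ (fun i => x (i, e i)) v = sampleModular κ Ψ x v +
      selectionGap e (fun j => Ψ |⟪κ (x j), v⟫|) / Fintype.card (ι × Bool) := by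
    rw [sampleModular, sampleModular, ← add_div,
      ← two_mul_sum_selected e fun j => Ψ |⟪κ (x j), v⟫|, hcard,
      mul_div_mul_left _ _ two_ne_zero]
  rw [h_split, add_sub_right_comm]
  refine (abs_add_le _ _).trans (add_le_add (hx v hv) ?_)
  rw [abs_div, Nat.abs_cast]
  exact div_le_div_of_nonneg_right (he v hv) (Nat.cast_nonneg _)

variable [Nonempty ι]

lemma sum_le (hx : IsApproxSample μ κ Ψ x (1 / 2)) {v : E} (hv : modular μ κ Ψ v ≤ 1) :
    ∑ i, Ψ |⟪κ (x i), v⟫| ≤ 3 / 2 * Fintype.card ι := by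
  have hι : (0 : ℝ) < Fintype.card ι := by exact_mod_cast Fintype.card_pos
  rw [← div_le_iff₀ hι]
  have := (abs_le.1 (hx v hv)).2
  unfold sampleModular at this
  linarith

lemma sum_rpow_le {p A : ℝ} {q : ℕ} (hx : IsApproxSample μ κ Ψ x (1 / 2))
    (hΨ : IsRegularPhi Ψ p A q) {v : E} (hv : modular μ κ Ψ v ≤ 1) :
    ∑ i, |⟪κ (x i), v⟫| ^ p ≤ 3 / 2 * growthConst Ψ A * Fintype.card ι := by
  have h_ratio : 0 ≤ A / Ψ 1 := div_nonneg (by linarith [hΨ.one_le_const]) hΨ.one_pos.le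
  calc ∑ i, |⟪κ (x i), v⟫| ^ p ≤ ∑ i, (1 + A / Ψ 1 * Ψ |⟪κ (x i), v⟫|) :=
        sum_le_sum fun i _ => hΨ.rpow_le (abs_nonneg _)
    _ = Fintype.card ι + A / Ψ 1 * ∑ i, Ψ |⟪κ (x i), v⟫| := by
        rw [sum_add_distrib, ← mul_sum, sum_const, card_univ, nsmul_eq_mul, mul_one]
    _ ≤ Fintype.card ι + A / Ψ 1 * (3 / 2 * Fintype.card ι) := by
        gcongr
        exact hx.sum_le hv
    _ ≤ 3 / 2 * growthConst Ψ A * Fintype.card ι := by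
        unfold growthConst
        linarith [(Fintype.card ι).cast_nonneg (α := ℝ)]

lemma norm_sq_mul_card_le {H : ℝ} (hF : IsBoundedParsevalFrame μ κ H)
    (hx : IsApproxSample μ κ (fun s => s ^ 2) x (1 / 2)) (v : E) :
    ‖v‖ ^ 2 * Fintype.card ι ≤ 2 * ∑ i, ⟪κ (x i), v⟫ ^ 2 := by
  rcases eq_or_ne v 0 with rfl | hv
  · simp
  have hv_norm : ‖v‖ ≠ 0 := norm_ne_zero_iff.2 hv
  have h_modular : modular μ κ (fun s => s ^ 2) (‖v‖⁻¹ • v) = 1 := by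
    rw [hF.modular_sq, norm_smul, norm_inv, norm_norm, inv_mul_cancel₀ hv_norm, one_pow]
  have h_scale : sampleModular κ (fun s => s ^ 2) x (‖v‖⁻¹ • v) =
      (∑ i, ⟪κ (x i), v⟫ ^ 2) / (‖v‖ ^ 2 * Fintype.card ι) := by
    simp only [sampleModular, inner_smul_right, sq_abs, mul_pow, ← mul_sum, inv_pow]
    field_simp
  have h_lower := (abs_le.1 (hx _ h_modular.le)).1
  rw [h_modular, h_scale] at h_lower
  have h_half : 1 / 2 ≤ (∑ i, ⟪κ (x i), v⟫ ^ 2) / (‖v‖ ^ 2 * Fintype.card ι) := by linarith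
  rw [le_div_iff₀ (by positivity)] at h_half
  linarith

/-- On a sample of size `n` with `‖v - w‖_∞ ≤ ε`, the norms compare as
`‖v - w‖_{L²}² ≤ ε ^ (2 - p) * ‖v - w‖_{L^p}^p`, and the unit ball of the modular is bounded in
`L^p`. -/
lemma norm_sub_sq_mul_le {p A H ε : ℝ} {q : ℕ} (hF : IsBoundedParsevalFrame μ κ H)
    (hΨ : IsRegularPhi Ψ p A q) (hH : 0 < H) (hx : IsApproxSample μ κ Ψ x (1 / 2))
    (hx_sq : IsApproxSample μ κ (fun s => s ^ 2) x (1 / 2)) {v w : E}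
    (hv : modular μ κ Ψ v ≤ 1) (hw : modular μ κ Ψ w ≤ 1) (hε : 0 < ε)
    (hvw : ∀ i, |⟪κ (x i), v - w⟫| ≤ ε) :
    ‖v - w‖ ^ 2 * H ^ 2 ≤ 24 * ε ^ 2 * (amplitude Ψ p A H / ε) ^ p := by
  have hp : 0 ≤ p := zero_le_one.trans hΨ.one_lt.le
  have hι : (0 : ℝ) < Fintype.card ι := by exact_mod_cast Fintype.card_pos
  have h_term (i : ι) : ⟪κ (x i), v - w⟫ ^ 2 ≤
      ε ^ (2 - p) * (4 * (|⟪κ (x i), v⟫| ^ p + |⟪κ (x i), w⟫| ^ p)) := by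
    refine (sq_le_rpow_mul_abs_rpow hp hΨ.le_two (hvw i)).trans ?_
    rw [inner_sub_right]
    exact mul_le_mul_of_nonneg_left (abs_sub_rpow_le hp hΨ.le_two _ _) (by positivity)
  have h_sum : ∑ i, ⟪κ (x i), v - w⟫ ^ 2 ≤
      ε ^ (2 - p) * (12 * growthConst Ψ A * Fintype.card ι) := by
    refine (sum_le_sum fun i _ => h_term i).trans ?_
    rw [← mul_sum, ← mul_sum, sum_add_distrib]
    refine mul_le_mul_of_nonneg_left ?_ (by positivity)
    linarith [hx.sum_rpow_le hΨ hv, hx.sum_rpow_le hΨ hw]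
  have h_norm : ‖v - w‖ ^ 2 ≤ 24 * ε ^ (2 - p) * growthConst Ψ A := by
    refine le_of_mul_le_mul_right ?_ hι
    linarith [norm_sq_mul_card_le hF hx_sq (v - w)]
  calc ‖v - w‖ ^ 2 * H ^ 2 ≤ 24 * ε ^ (2 - p) * growthConst Ψ A * H ^ 2 := by gcongr
    _ = 24 * ε ^ 2 * (amplitude Ψ p A H / ε) ^ p := by
        rw [Real.div_rpow (hΨ.amplitude_pos hH).le hε.le, hΨ.amplitude_rpow, Real.rpow_sub hε,
          Real.rpow_two]
        ring

lemma isSelfBounding {p A H D : ℝ} {q : ℕ} [IsProbabilityMeasure μ]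
    (hF : IsBoundedParsevalFrame μ κ H) (hΨ : IsRegularPhi Ψ p A q) (hH : 0 < H)
    (hx : IsApproxSample μ κ Ψ x (1 / 2)) (hD : q ^ 2 * A * Ψ (amplitude Ψ p A H) ≤ D) :
    IsSelfBounding (sampleMap (κ ∘ x) '' {v | modular μ κ Ψ v ≤ 1}) (fun y j => Ψ |y j|) p
      (amplitude Ψ p A H) D (2 * Fintype.card ι) where
  nonneg _ _ _ := hΨ.nonneg _ (abs_nonneg _)
  sq_sub_le := by
    rintro _ ⟨v, hv, rfl⟩ _ ⟨w, hw, rfl⟩ j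
    have h_amplitude := hΨ.amplitude_pos hH
    refine (hΨ.sub_abs_sq_le (hF.abs_inner_le_amplitude hΨ hH hv _)
      (hF.abs_inner_le_amplitude hΨ hH hw _) h_amplitude
      (dist_le_pi_dist (sampleMap (κ ∘ x) v) (sampleMap (κ ∘ x) w) j)).trans ?_
    refine mul_le_mul_of_nonneg_right (mul_le_mul_of_nonneg_right hD (by positivity)) ?_
    exact add_nonneg (hΨ.nonneg _ (abs_nonneg _)) (hΨ.nonneg _ (abs_nonneg _))
  sum_le := by
    rintro _ ⟨v, hv, rfl⟩
    exact (hx.sum_le hv).trans (by gcongr; norm_num)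

end IsApproxSample

variable [Nonempty ι] [FiniteDimensional ℝ E] {μ : Measure Ω} [IsProbabilityMeasure μ] {κ : Ω → E}
  {Ψ : ℝ → ℝ} {x : ι × Bool → Ω} {p A H D : ℝ} {q : ℕ}

lemma IsApproxSample.exists_bad_signs (hF : IsBoundedParsevalFrame μ κ H)
    (hΨ : IsRegularPhi Ψ p A q) (hH : 0 < H) (hE : 1 ≤ Module.finrank ℝ E) (hD_pos : 0 < D)
    (hD : q ^ 2 * A * Ψ (amplitude Ψ p A H) ≤ D) (hx : IsApproxSample μ κ Ψ x (1 / 2))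
    (hx_sq : IsApproxSample μ κ (fun s => s ^ 2) x (1 / 2)) :
    ∃ bad : Finset (ι → Bool), 4 * (#bad : ℝ) ≤ 2 ^ Fintype.card ι ∧
      ∀ e ∉ bad, ∀ v, modular μ κ Ψ v ≤ 1 → |selectionGap e (fun j => Ψ |⟪κ (x j), v⟫|)| ≤
        3000 * Real.logb 2 (2 * Module.finrank ℝ E) *
          √(D * Fintype.card (ι × Bool) * Real.log (2 * Fintype.card (ι × Bool) + 1)) := by
  have h_amplitude := hΨ.amplitude_pos hH
  have h_zero : modular μ κ Ψ 0 ≤ 1 := by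
    simp only [modular, inner_zero_right, abs_zero, hΨ.map_zero, integral_zero, zero_le_one]
  exact exists_bad_signs_sampleMap (B := {v | modular μ κ Ψ v ≤ 1}) h_zero hΨ.one_lt.le hΨ.le_two
    h_amplitude hH hD_pos hE (fun j => hF.norm_le (x j))
    (fun v hv => (pi_norm_le_iff_of_nonneg h_amplitude.le).2 fun j =>
      hF.abs_inner_le_amplitude hΨ hH hv (x j))
    (fun v hv w hw ε hε hvw => hx.norm_sub_sq_mul_le hF hΨ hH hx_sq hv hw hε
      ((pi_norm_le_iff_of_nonneg hε.le).1 hvw))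
    (funext fun j => by simp only [Pi.zero_apply, abs_zero, hΨ.map_zero])
    (hx.isSelfBounding hF hΨ hH hD)

theorem IsFaithfulSample.exists_half {t : ℝ} (hF : IsBoundedParsevalFrame μ κ H)
    (hΨ : IsRegularPhi Ψ p A q) (hH : 0 < H) (hE : 1 ≤ Module.finrank ℝ E)
    (hD : q ^ 2 * A * Ψ (amplitude Ψ p A H) ≤ D) (hD_sq : 8 * H ^ 2 ≤ D) (ht : t ≤ 1 / 2)
    (hx : IsFaithfulSample μ κ Ψ x t) :
    ∃ x' : ι → Ω, IsFaithfulSample μ κ Ψ x'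
      (t + halvingError D (Module.finrank ℝ E) (Fintype.card (ι × Bool))) := by
  classical
  obtain ⟨h_modular, h_sq⟩ := hx
  have hD_pos : 0 < D := lt_of_lt_of_le (by positivity) hD_sq
  have h_amplitude_sq : amplitude (fun s => s ^ 2) 2 1 H ^ 2 = 2 * H ^ 2 := by
    have := isRegularPhi_sq.amplitude_rpow H
    norm_num [growthConst] at this
    linarith
  obtain ⟨bad, hbad, h_gap⟩ := (h_modular.mono ht).exists_bad_signs hF hΨ hH hE hD_pos hD
    (h_sq.mono ht)
  obtain ⟨bad_sq, hbad_sq, h_gap_sq⟩ := (h_sq.mono ht).exists_bad_signs hF isRegularPhi_sq hH hE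
    hD_pos (by rw [h_amplitude_sq]; norm_num; linarith) (h_sq.mono ht)
  obtain ⟨e, he⟩ : ∃ e, e ∉ bad ∪ bad_sq := by
    by_contra! h_all
    have hcard := card_union_le bad bad_sq
    rw [eq_univ_iff_forall.2 h_all, card_univ, Fintype.card_fun, Fintype.card_bool] at hcard
    have hcard : (2 : ℝ) ^ Fintype.card ι ≤ #bad + #bad_sq := by exact_mod_cast hcard
    linarith [show (0 : ℝ) < 2 ^ Fintype.card ι by positivity]
  rw [notMem_union] at he
  exact ⟨fun i => x (i, e i), h_modular.select (h_gap e he.1), h_sq.select (h_gap_sq e he.2)⟩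

end Sample

/-! ## Large random samples -/

section LawOfLargeNumbers

open Filter Topology

variable {Ω : Type*} [MeasurableSpace Ω] (μ : Measure Ω) [IsProbabilityMeasure μ]

lemma ae_tendsto_average {g : Ω → ℝ} (hg : Measurable g) (hg_int : Integrable g μ) :
    ∀ᵐ ω ∂(Measure.infinitePi fun _ : ℕ => μ),
      Tendsto (fun n : ℕ => (∑ i ∈ range n, g (ω i)) / n) atTop (𝓝 (∫ x, g x ∂μ)) := by
  let P : Measure (ℕ → Ω) := Measure.infinitePi fun _ => μ
  have h_eval (i : ℕ) : MeasurePreserving (fun ω : ℕ → Ω => ω i) P μ :=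
    measurePreserving_eval_infinitePi (fun _ => μ) i
  have h_law (i : ℕ) : P.map (fun ω => g (ω i)) = μ.map g := by
    rw [← (h_eval i).map_eq, Measure.map_map hg (h_eval i).measurable]
    rfl
  have h_mean : ∫ ω, g (ω 0) ∂P = ∫ x, g x ∂μ := by
    rw [← (h_eval 0).map_eq,
      integral_map (h_eval 0).measurable.aemeasurable hg.aestronglyMeasurable]
  rw [← h_mean]
  refine ProbabilityTheory.strong_law_ae_real (fun (i : ℕ) (ω : ℕ → Ω) => g (ω i))
    ((h_eval 0).integrable_comp_of_integrable hg_int) (fun i j hij => ?_) (fun i => ?_)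
  · exact (ProbabilityTheory.iIndepFun_infinitePi (P := fun _ : ℕ => μ) (X := fun _ => g)
      fun _ => hg).indepFun hij
  · exact ⟨(hg.comp (h_eval i).measurable).aemeasurable,
      (hg.comp (h_eval 0).measurable).aemeasurable, (h_law i).trans (h_law 0).symm⟩

lemma ae_eventually_abs_average_sub_le {T : Type*} [PseudoMetricSpace T] {B : Set T}
    (hB : TotallyBounded B) {F : T → Ω → ℝ} (hF : ∀ v ∈ B, Measurable (F v))
    (hF_int : ∀ v ∈ B, Integrable (F v) μ)
    (hF_equi : ∀ ε > 0, ∃ δ > 0, ∀ v ∈ B, ∀ w ∈ B, dist v w < δ → ∀ x, |F v x - F w x| ≤ ε)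
    {τ : ℝ} (hτ : 0 < τ) :
    ∀ᵐ ω ∂(Measure.infinitePi fun _ : ℕ => μ), ∀ᶠ n : ℕ in atTop,
      ∀ v ∈ B, |(∑ i ∈ range n, F v (ω i)) / n - ∫ x, F v x ∂μ| ≤ τ := by
  have hτ_quarter : 0 < τ / 4 := by positivity
  obtain ⟨δ, hδ, h_close⟩ := hF_equi _ hτ_quarter
  obtain ⟨net, h_netB, h_fin, h_cover⟩ := Metric.finite_approx_of_totallyBounded hB δ hδ
  have h_lln := (ae_ball_iff h_fin.countable).2 fun v hv =>
    ae_tendsto_average μ (hF v (h_netB hv)) (hF_int v (h_netB hv))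
  filter_upwards [h_lln] with ω hω
  have h_net : ∀ᶠ n : ℕ in atTop, ∀ v ∈ net,
      |(∑ i ∈ range n, F v (ω i)) / n - ∫ x, F v x ∂μ| < τ / 4 :=
    (eventually_all_finite h_fin).2 fun v hv => Metric.tendsto_nhds.1 (hω v hv) _ hτ_quarter
  filter_upwards [h_net, eventually_gt_atTop 0] with n hn hn_pos v hv
  obtain ⟨w, hw, hvw⟩ := Set.mem_iUnion₂.1 (h_cover hv)
  have h_dist := h_close v hv w (h_netB hw) hvw
  have h_average : |(∑ i ∈ range n, F v (ω i)) / n - (∑ i ∈ range n, F w (ω i)) / n| ≤ τ / 4 := by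
    have hn_pos' : (0 : ℝ) < n := Nat.cast_pos.2 hn_pos
    rw [← sub_div, ← sum_sub_distrib, abs_div, abs_of_pos hn_pos', div_le_iff₀ hn_pos']
    refine ((abs_sum_le_sum_abs _ _).trans (sum_le_sum fun i _ => h_dist (ω i))).trans_eq ?_
    rw [sum_const, card_range, nsmul_eq_mul, mul_comm]
  have h_integral : |∫ x, F v x ∂μ - ∫ x, F w x ∂μ| ≤ τ / 4 := by
    rw [← integral_sub (hF_int v hv) (hF_int w (h_netB hw))]
    simpa using norm_integral_le_of_norm_le_const (μ := μ) (f := fun x => F v x - F w x)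
      (.of_forall h_dist)
  have h_w := abs_lt.1 (hn w hw)
  rw [abs_le] at h_average h_integral ⊢
  constructor <;> linarith

end LawOfLargeNumbers

lemma IsRegularPhi.continuous_comp_abs {Ψ : ℝ → ℝ} {p A : ℝ} {q : ℕ} (hΨ : IsRegularPhi Ψ p A q) :
    Continuous fun t => Ψ |t| := by
  refine continuous_iff_continuousAt.2 fun x => ?_
  have hM : 0 < |x| + 1 := by positivity
  have hp : 0 < p := zero_lt_one.trans hΨ.one_lt
  have h_bound : ∀ᶠ y in nhds x, (Ψ |y| - Ψ |x|) ^ 2 ≤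
      q ^ 2 * A * Ψ (|x| + 1) * (|y - x| / (|x| + 1)) ^ p * (2 * Ψ (|x| + 1)) := by
    filter_upwards [(continuous_abs.tendsto x).eventually_le_const (lt_add_one |x|)] with y hy
    refine (hΨ.sub_abs_sq_le hy (by linarith) hM le_rfl).trans ?_
    have hA := hΨ.one_le_const
    have h_nonneg := hΨ.nonneg _ hM.le
    have hy_le : Ψ |y| ≤ Ψ (|x| + 1) := hΨ.monotoneOn (Set.mem_Ici.2 (abs_nonneg y)) hM.le hy
    have hx_le : Ψ |x| ≤ Ψ (|x| + 1) :=
      hΨ.monotoneOn (Set.mem_Ici.2 (abs_nonneg x)) hM.le (by linarith)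
    exact mul_le_mul_of_nonneg_left (by linarith) (by positivity)
  have h_zero : Filter.Tendsto (fun y => q ^ 2 * A * Ψ (|x| + 1) * (|y - x| / (|x| + 1)) ^ p *
      (2 * Ψ (|x| + 1))) (nhds x) (nhds 0) := by
    have h_cont : Continuous fun y => q ^ 2 * A * Ψ (|x| + 1) * (|y - x| / (|x| + 1)) ^ p *
        (2 * Ψ (|x| + 1)) := by
      fun_prop (disch := exact hp.le)
    simpa [Real.zero_rpow hp.ne'] using h_cont.tendsto x
  have h_sq := squeeze_zero' (.of_forall fun y => sq_nonneg _) h_bound h_zero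
  rw [ContinuousAt, ← tendsto_sub_nhds_zero_iff, tendsto_zero_iff_abs_tendsto_zero]
  simpa [Function.comp_def, Real.sqrt_sq_eq_abs] using h_sq.sqrt

section InitialSample

open Filter

variable {Ω E : Type*} [MeasurableSpace Ω] [NormedAddCommGroup E] [InnerProductSpace ℝ E]
  [FiniteDimensional ℝ E] {μ : Measure Ω} [IsProbabilityMeasure μ] {κ : Ω → E} {Ψ : ℝ → ℝ}
  {p A H τ : ℝ} {q : ℕ}

namespace IsBoundedParsevalFrame

lemma ae_eventually_isApproxSample (hF : IsBoundedParsevalFrame μ κ H) (hΨ : IsRegularPhi Ψ p A q)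
    (hH : 0 < H) (hτ : 0 < τ) :
    ∀ᵐ ω ∂(Measure.infinitePi fun _ : ℕ => μ), ∀ᶠ n : ℕ in atTop,
      IsApproxSample μ κ Ψ (fun i : Fin n => ω i) τ := by
  have h_bounded : TotallyBounded {v | modular μ κ Ψ v ≤ 1} := by
    refine (isCompact_closedBall (0 : E) (amplitude Ψ p A H / H)).totallyBounded.subset ?_
    intro v hv
    rw [mem_closedBall_zero_iff, le_div_iff₀' hH]
    exact hF.mul_norm_le_amplitude hΨ hH hv
  have h_equi : ∀ ε > 0, ∃ δ > 0, ∀ v, modular μ κ Ψ v ≤ 1 → ∀ w, modular μ κ Ψ w ≤ 1 →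
      dist v w < δ → ∀ x, |(Ψ |⟪κ x, v⟫|) - (Ψ |⟪κ x, w⟫|)| ≤ ε := by
    intro ε hε
    obtain ⟨δ, hδ, h_unif⟩ := Metric.uniformContinuousOn_iff_le.1
      (isCompact_Icc.uniformContinuousOn_of_continuous hΨ.continuous_comp_abs.continuousOn) ε hε
    refine ⟨δ / H, div_pos hδ hH, fun v hv w hw hvw x => ?_⟩
    refine h_unif _ (abs_le.1 (hF.abs_inner_le_amplitude hΨ hH hv x)) _
      (abs_le.1 (hF.abs_inner_le_amplitude hΨ hH hw x)) ?_
    rw [Real.dist_eq, ← inner_sub_right]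
    refine (hF.abs_inner_le _ x).trans ?_
    rw [← le_div_iff₀' hH, ← dist_eq_norm]
    exact hvw.le
  filter_upwards [ae_eventually_abs_average_sub_le μ h_bounded
    (fun v _ => (measurable_comp_abs hΨ.monotoneOn).comp (hF.measurable_inner v))
    (fun v _ => hF.integrable hΨ v) h_equi hτ] with ω hω
  filter_upwards [hω] with n hn v hv
  simpa only [sampleModular, modular, sum_range, Fintype.card_fin, Function.comp_apply]
    using hn v hv

lemma eventually_exists_isFaithfulSample (hF : IsBoundedParsevalFrame μ κ H)
    (hΨ : IsRegularPhi Ψ p A q) (hH : 0 < H) (hτ : 0 < τ) :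
    ∀ᶠ n in atTop, ∃ x : Fin n → Ω, IsFaithfulSample μ κ Ψ x τ := by
  obtain ⟨ω, hω, hω_sq⟩ := ((hF.ae_eventually_isApproxSample hΨ hH hτ).and
    (hF.ae_eventually_isApproxSample isRegularPhi_sq hH hτ)).exists
  filter_upwards [hω, hω_sq] with n hn hn_sq using ⟨_, hn, hn_sq⟩

end IsBoundedParsevalFrame

end InitialSample

/-! ## Iterated halving -/

lemma log_two_mul_pow_mul_add_one_le {m : ℝ} (hm : 1 ≤ m) (k : ℕ) :
    Real.log (2 * (2 ^ (k + 1) * m) + 1) ≤ 2 * (k + 1) * Real.log (2 * m + 1) := by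
  have h_pow : (1 : ℝ) ≤ 2 ^ (k + 1) := one_le_pow₀ one_le_two
  have h_log := one_le_log_two_mul_add_one hm
  have h_log_two : Real.log 2 ≤ 1 := by linarith [Real.log_two_lt_d9]
  calc Real.log (2 * (2 ^ (k + 1) * m) + 1) ≤ Real.log (2 ^ (k + 1) * (2 * m + 1)) :=
        Real.log_le_log (by positivity) (by linarith)
    _ = (k + 1) * Real.log 2 + Real.log (2 * m + 1) := by
        rw [Real.log_mul (by positivity) (by positivity), Real.log_pow, Nat.cast_add_one]
    _ ≤ 2 * (k + 1) * Real.log (2 * m + 1) := by nlinarith [(k.cast_nonneg : (0 : ℝ) ≤ k)]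

/-- The geometric decay comes from the size `2 ^ (k + 1) * m` of the sample in the denominator,
which beats the factor `k + 1` from the logarithm. -/
lemma halvingError_le {D m τ : ℝ} {N : ℕ} (hD : 0 ≤ D) (hm : 1 ≤ m) (hτ : 0 ≤ τ)
    (h : D * Real.logb 2 (2 * N) ^ 2 * Real.log (2 * m + 1) ≤
      τ ^ 2 / (2 * 16 ^ 2 * 3000 ^ 2) * m) (k : ℕ) :
    halvingError D N (2 ^ (k + 1) * m) ≤ τ / 16 * (7 / 8) ^ k := by
  set n := 2 ^ (k + 1) * m with hn_def
  set l := Real.logb 2 (2 * N)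
  have hn : 0 < n := by positivity
  have h_log_nonneg : 0 ≤ Real.log (2 * n + 1) := Real.log_nonneg (by linarith)
  rw [halvingError, div_le_iff₀ hn]
  refine (le_abs_self _).trans (abs_le_of_sq_le_sq ?_ (by positivity))
  calc (3000 * l * √(D * n * Real.log (2 * n + 1))) ^ 2
      = 3000 ^ 2 * l ^ 2 * (D * n * Real.log (2 * n + 1)) := by
        rw [mul_pow, mul_pow, Real.sq_sqrt (by positivity)]
    _ ≤ 3000 ^ 2 * l ^ 2 * (D * n * (2 * (k + 1) * Real.log (2 * m + 1))) := by
        gcongr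
        exact log_two_mul_pow_mul_add_one_le hm k
    _ = 3000 ^ 2 * 2 * (k + 1) * n * (D * l ^ 2 * Real.log (2 * m + 1)) := by ring
    _ ≤ 3000 ^ 2 * 2 * (k + 1) * n * (τ ^ 2 / (2 * 16 ^ 2 * 3000 ^ 2) * m) := by gcongr
    _ = (τ / 16) ^ 2 * n ^ 2 / 2 * ((k + 1) * (1 / 2) ^ k) := by
        rw [hn_def, one_div_pow]
        field_simp
        ring
    _ ≤ (τ / 16) ^ 2 * n ^ 2 / 2 * (2 * ((7 / 8) ^ k) ^ 2) :=
        mul_le_mul_of_nonneg_left (succ_mul_half_pow_le k) (by positivity)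
    _ = (τ / 16 * (7 / 8) ^ k * n) ^ 2 := by ring

/-- The factor `log (2 * m + 1)` is absorbed by writing `m = r * (C * W * Λ)` with `r ≥ 1`. -/
lemma exists_mul_log_le_of_mul_le {C₀ η : ℝ} (hC₀ : 0 ≤ C₀) (hη : 0 < η) :
    ∃ C : ℝ, 0 < C ∧ ∀ W Λ m : ℝ, 0 < W → 1 ≤ Λ → 1 ≤ m → Real.log W ≤ C₀ * Λ → C * W * Λ ≤ m →
      W * Real.log (2 * m + 1) ≤ η * m := by
  set s := max 1 ((C₀ + 6) / η)
  have hs : 1 ≤ s := le_max_left _ _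
  have hsη : C₀ + 6 ≤ η * s := (div_le_iff₀' hη).1 (le_max_right _ _)
  refine ⟨s ^ 2, by positivity, fun W Λ m hW hΛ hm h_log h_le => ?_⟩
  have hX : 0 < s ^ 2 * W * Λ := by positivity
  obtain ⟨r, rfl⟩ : ∃ r, m = r * (s ^ 2 * W * Λ) := ⟨_, (div_mul_cancel₀ m hX.ne').symm⟩
  have hr : 1 ≤ r := le_of_mul_le_mul_right (by linarith) hX
  have hΛr : 1 ≤ Λ * r := one_le_mul_of_one_le_of_one_le hΛ hr
  have h_log_le : Real.log (2 * (r * (s ^ 2 * W * Λ)) + 1) ≤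
      2 + 2 * (s - 1) + C₀ * Λ + (Λ - 1) + (r - 1) := by
    calc Real.log (2 * (r * (s ^ 2 * W * Λ)) + 1) ≤ Real.log (3 * s ^ 2 * W * Λ * r) :=
          Real.log_le_log (by positivity) (by linarith)
      _ = Real.log 3 + 2 * Real.log s + Real.log W + Real.log Λ + Real.log r := by
          rw [Real.log_mul (by positivity) (by positivity),
            Real.log_mul (by positivity) (by positivity), Real.log_mul (by positivity) hW.ne',
            Real.log_mul (by norm_num) (by positivity), Real.log_pow, Nat.cast_two]
      _ ≤ 2 + 2 * (s - 1) + C₀ * Λ + (Λ - 1) + (r - 1) := by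
          have h_log_three := Real.log_le_sub_one_of_pos (zero_lt_three' ℝ)
          have h_log_s := Real.log_le_sub_one_of_pos (zero_lt_one.trans_le hs)
          have h_log_Λ := Real.log_le_sub_one_of_pos (zero_lt_one.trans_le hΛ)
          have h_log_r := Real.log_le_sub_one_of_pos (zero_lt_one.trans_le hr)
          linarith
  have hΛ_le : Λ ≤ s * (Λ * r) := by nlinarith
  have hr_le : r ≤ s * (Λ * r) := by nlinarith
  have hs_le : s ≤ s * (Λ * r) := le_mul_of_one_le_right (by positivity) hΛr
  have h_absorb : Real.log (2 * (r * (s ^ 2 * W * Λ)) + 1) ≤ η * s * (s * (Λ * r)) := by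
    calc Real.log (2 * (r * (s ^ 2 * W * Λ)) + 1) ≤ (C₀ + 6) * (s * (Λ * r)) := by
          linarith [mul_le_mul_of_nonneg_left hΛ_le hC₀]
      _ ≤ η * s * (s * (Λ * r)) := by gcongr
  calc W * Real.log (2 * (r * (s ^ 2 * W * Λ)) + 1) ≤ W * (η * s * (s * (Λ * r))) := by gcongr
    _ = η * (r * (s ^ 2 * W * Λ)) := by ring

lemma one_add_log_le_logb_two_mul {x : ℝ} (hx : 1 ≤ x) :
    1 + Real.log x ≤ Real.logb 2 (2 * x) := by
  have h_log_two := Real.log_pos one_lt_two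
  rw [Real.logb_mul two_ne_zero (zero_lt_one.trans_le hx).ne', Real.logb_self_eq_one one_lt_two,
    Real.logb, add_le_add_iff_left, le_div_iff₀ h_log_two]
  exact mul_le_of_le_one_right (Real.log_nonneg hx) (by linarith [Real.log_two_lt_d9])

lemma logb_two_natCast_le (n : ℕ) : Real.logb 2 n ≤ n := by
  rcases n.eq_zero_or_pos with rfl | hn
  · simp
  rw [Real.logb_le_iff_le_rpow one_lt_two (Nat.cast_pos.2 hn), Real.rpow_natCast]
  exact_mod_cast Nat.lt_two_pow_self.le

/-- The control on increments with which samples are halved; it dominates the increments of both the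
modular of `Ψ` and the squared norm. -/
def incrementBound (Ψ : ℝ → ℝ) (p A : ℝ) (q : ℕ) (H : ℝ) : ℝ :=
  (q ^ 2 * A + 8 * (A / Ψ 1)) * Ψ (amplitude Ψ p A H)

namespace IsRegularPhi

variable {Ψ : ℝ → ℝ} {p A H : ℝ} {q : ℕ}

lemma le_incrementBound (hΨ : IsRegularPhi Ψ p A q) (hH : 0 < H) :
    q ^ 2 * A * Ψ (amplitude Ψ p A H) ≤ incrementBound Ψ p A q H := by
  have hA := hΨ.one_le_const
  have h_one := hΨ.one_pos
  refine mul_le_mul_of_nonneg_right ?_ (hΨ.nonneg _ (hΨ.amplitude_pos hH).le)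
  exact le_add_of_nonneg_right (by positivity)

lemma mul_sq_le_incrementBound (hΨ : IsRegularPhi Ψ p A q) (hH : 1 ≤ H) :
    8 * H ^ 2 ≤ incrementBound Ψ p A q H := by
  have hA := hΨ.one_le_const
  have h_amplitude := hΨ.nonneg _ (hΨ.amplitude_pos (zero_lt_one.trans_le hH)).le
  have h_sq := hΨ.sq_le_mul_apply_amplitude hH
  have : 0 ≤ q ^ 2 * A * Ψ (amplitude Ψ p A H) := by positivity
  unfold incrementBound
  linarith

lemma apply_amplitude_le (hΨ : IsRegularPhi Ψ p A q) (hH : 1 ≤ H) :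
    Ψ (amplitude Ψ p A H) ≤ Ψ 1 * (growthConst Ψ A * H ^ 2) ^ q := by
  have h_amplitude := hΨ.one_le_amplitude hH
  calc Ψ (amplitude Ψ p A H) ≤ Ψ 1 * amplitude Ψ p A H ^ q := by
        simpa using hΨ.mul_pow_le 1 _ zero_lt_one h_amplitude
    _ ≤ Ψ 1 * (growthConst Ψ A * H ^ 2) ^ q := by
        rw [← hΨ.amplitude_rpow]
        have := hΨ.one_pos
        gcongr
        exact Real.self_le_rpow_of_one_le h_amplitude hΨ.one_lt.le

lemma exists_incrementBound_mul_sq_le (hΨ : IsRegularPhi Ψ p A q) :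
    ∃ C, 1 ≤ C ∧ ∀ (H : ℝ) (N : ℕ), 1 ≤ H → 1 ≤ N → (N : ℝ) ≤ H ^ 2 →
      incrementBound Ψ p A q H * Real.logb 2 (2 * N) ^ 2 ≤ C * (H ^ 2) ^ (q + 2) := by
  have hA := hΨ.one_le_const
  have h_one := hΨ.one_pos
  have hK := hΨ.one_lt_growthConst
  set c := q ^ 2 * A + 8 * (A / Ψ 1)
  refine ⟨max 1 (4 * c * Ψ 1 * growthConst Ψ A ^ q), le_max_left _ _, fun H N hH hN hNH => ?_⟩
  have hl := one_le_logb_two_mul (Nat.one_le_cast.2 hN)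
  have hl_le : Real.logb 2 (2 * N) ≤ 2 * H ^ 2 := by
    have := logb_two_natCast_le (2 * N)
    push_cast at this
    linarith
  calc incrementBound Ψ p A q H * Real.logb 2 (2 * N) ^ 2
      ≤ c * (Ψ 1 * (growthConst Ψ A * H ^ 2) ^ q) * (2 * H ^ 2) ^ 2 := by
        unfold incrementBound
        gcongr
        exact hΨ.apply_amplitude_le hH
    _ = 4 * c * Ψ 1 * growthConst Ψ A ^ q * (H ^ 2) ^ (q + 2) := by ring
    _ ≤ max 1 (4 * c * Ψ 1 * growthConst Ψ A ^ q) * (H ^ 2) ^ (q + 2) := by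
        gcongr
        exact le_max_right _ _

lemma exists_log_le (hΨ : IsRegularPhi Ψ p A q) : ∃ C, 0 ≤ C ∧ ∀ (H : ℝ) (N : ℕ), 1 ≤ H → 1 ≤ N →
    (N : ℝ) ≤ H ^ 2 → Real.log (incrementBound Ψ p A q H * Real.logb 2 (2 * N) ^ 2) ≤
      C * Real.logb 2 (2 * H ^ 2) := by
  obtain ⟨C, hC, h_poly⟩ := hΨ.exists_incrementBound_mul_sq_le
  have hC_log := Real.log_nonneg hC
  refine ⟨Real.log C + (q + 2), by positivity, fun H N hH hN hNH => ?_⟩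
  have hl := one_le_logb_two_mul (Nat.one_le_cast.2 hN)
  have hH_sq : 1 ≤ H ^ 2 := one_le_pow₀ hH
  have hW_pos : 0 < incrementBound Ψ p A q H :=
    (by positivity : 0 < 8 * H ^ 2).trans_le (hΨ.mul_sq_le_incrementBound hH)
  have hΛ := one_add_log_le_logb_two_mul hH_sq
  have hH_log := Real.log_nonneg hH_sq
  calc Real.log (incrementBound Ψ p A q H * Real.logb 2 (2 * N) ^ 2)
      ≤ Real.log (C * (H ^ 2) ^ (q + 2)) :=
        Real.log_le_log (by positivity) (h_poly H N hH hN hNH)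
    _ = Real.log C + (q + 2) * Real.log (H ^ 2) := by
        rw [Real.log_mul (by positivity) (by positivity), Real.log_pow]
        push_cast
        rfl
    _ ≤ Real.log C * Real.logb 2 (2 * H ^ 2) + (q + 2) * Real.logb 2 (2 * H ^ 2) := by
        gcongr
        · exact le_mul_of_one_le_right hC_log (by linarith)
        · linarith
    _ = (Real.log C + (q + 2)) * Real.logb 2 (2 * H ^ 2) := by ring

end IsRegularPhi

section Iteration

variable {Ω E : Type*} [MeasurableSpace Ω] [NormedAddCommGroup E] [InnerProductSpace ℝ E]
  [FiniteDimensional ℝ E] {μ : Measure Ω} [IsProbabilityMeasure μ] {κ : Ω → E} {Ψ : ℝ → ℝ}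
  {p A H D τ : ℝ} {q m : ℕ}

lemma IsFaithfulSample.exists_of_halvingError_le (hF : IsBoundedParsevalFrame μ κ H)
    (hΨ : IsRegularPhi Ψ p A q) (hH : 0 < H) (hE : 1 ≤ Module.finrank ℝ E)
    (hD : q ^ 2 * A * Ψ (amplitude Ψ p A H) ≤ D) (hD_sq : 8 * H ^ 2 ≤ D) (hτ : 0 ≤ τ)
    (hτ_half : τ ≤ 1 / 2) (hm : 1 ≤ m)
    (h_err : ∀ k : ℕ, halvingError D (Module.finrank ℝ E) (2 ^ (k + 1) * m) ≤
      τ / 16 * (7 / 8) ^ k) {K : ℕ} {x : Fin (2 ^ K * m) → Ω}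
    (hx : IsFaithfulSample μ κ Ψ x (τ / 2 + τ / 2 * (7 / 8) ^ K)) :
    ∃ y : Fin m → Ω, IsApproxSample μ κ Ψ y τ := by
  induction K with
  | zero =>
    have h_card : m = 2 ^ 0 * m := by rw [pow_zero, one_mul]
    refine ⟨x ∘ finCongr h_card, (hx.isApproxSample.comp_equiv _).mono ?_⟩
    rw [pow_zero, mul_one, add_halves]
  | succ K ih =>
    have h_card : Fintype.card (Fin (2 ^ K * m) × Bool) = 2 ^ (K + 1) * m := by
      rw [Fintype.card_prod, Fintype.card_fin, Fintype.card_bool]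
      ring
    have : Nonempty (Fin (2 ^ K * m)) := ⟨⟨0, by positivity⟩⟩
    let e : Fin (2 ^ K * m) × Bool ≃ Fin (2 ^ (K + 1) * m) :=
      Fintype.equivFinOfCardEq h_card
    have h_pow : τ / 2 * (7 / 8) ^ (K + 1) ≤ τ / 2 :=
      mul_le_of_le_one_right (by positivity) (pow_le_one₀ (by norm_num) (by norm_num))
    obtain ⟨y, hy⟩ := IsFaithfulSample.exists_half hF hΨ hH hE hD hD_sq (by linarith)
      ⟨hx.isApproxSample.comp_equiv e, hx.isApproxSample_sq.comp_equiv e⟩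
    rw [h_card] at hy
    push_cast at hy
    have h_le : τ / 2 + τ / 2 * (7 / 8) ^ (K + 1) + halvingError D (Module.finrank ℝ E)
        (2 ^ (K + 1) * m) ≤ τ / 2 + τ / 2 * (7 / 8) ^ K := by
      rw [pow_succ]
      linarith [h_err K]
    exact ih ⟨hy.isApproxSample.mono h_le, hy.isApproxSample_sq.mono h_le⟩

end Iteration

theorem IsRegularPhi.exists_isApproxSample {Ψ : ℝ → ℝ} {p A τ : ℝ} {q : ℕ}
    (hΨ : IsRegularPhi Ψ p A q) (hτ : 0 < τ) (hτ_half : τ ≤ 1 / 2) :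
    ∃ C : ℝ, 0 < C ∧ ∀ {Ω E : Type*} [MeasurableSpace Ω] [NormedAddCommGroup E]
      [InnerProductSpace ℝ E] [FiniteDimensional ℝ E] {μ : Measure Ω} [IsProbabilityMeasure μ]
      {κ : Ω → E} {H : ℝ} {m : ℕ}, IsBoundedParsevalFrame μ κ H → 1 ≤ H →
      1 ≤ Module.finrank ℝ E → 1 ≤ m →
      C * Ψ (amplitude Ψ p A H) * Real.logb 2 (2 * Module.finrank ℝ E) ^ 2 *
        Real.logb 2 (2 * H ^ 2) ≤ m →
      ∃ x : Fin m → Ω, IsApproxSample μ κ Ψ x τ := by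
  have hA := hΨ.one_le_const
  have h_one := hΨ.one_pos
  obtain ⟨C₀, hC₀, h_log⟩ := hΨ.exists_log_le
  obtain ⟨C, hC, h_absorb⟩ := exists_mul_log_le_of_mul_le hC₀
    (by positivity : 0 < τ ^ 2 / (2 * 16 ^ 2 * 3000 ^ 2))
  refine ⟨C * (q ^ 2 * A + 8 * (A / Ψ 1)), by positivity, ?_⟩
  intro Ω E _ _ _ _ μ _ κ H m hF hH hE hm h_le
  have hH_pos : 0 < H := zero_lt_one.trans_le hH
  have hm_cast : (1 : ℝ) ≤ m := by exact_mod_cast hm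
  have hD_sq := hΨ.mul_sq_le_incrementBound hH
  have hD_pos : 0 < incrementBound Ψ p A q H := lt_of_lt_of_le (by positivity) hD_sq
  have hl := one_le_logb_two_mul (Nat.one_le_cast.2 hE)
  have hΛ : 1 ≤ Real.logb 2 (2 * H ^ 2) := one_le_logb_two_mul (one_le_pow₀ hH)
  have h_err := halvingError_le hD_pos.le hm_cast hτ.le
    (h_absorb _ _ m (by positivity) hΛ hm_cast (h_log H _ hH hE hF.finrank_le)
      (by unfold incrementBound; linarith))
  obtain ⟨n, hn⟩ := Filter.eventually_atTop.1
    (hF.eventually_exists_isFaithfulSample hΨ hH_pos (half_pos hτ))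
  obtain ⟨x, hx⟩ := hn (2 ^ n * m) (Nat.lt_two_pow_self.le.trans (Nat.le_mul_of_pos_right _ hm))
  have h_mono : τ / 2 ≤ τ / 2 + τ / 2 * (7 / 8) ^ n := le_add_of_nonneg_right (by positivity)
  exact IsFaithfulSample.exists_of_halvingError_le hF hΨ hH_pos hE (hΨ.le_incrementBound hH_pos)
    hD_sq hτ.le hτ_half hm h_err ⟨hx.isApproxSample.mono h_mono, hx.isApproxSample_sq.mono h_mono⟩

/-! ## Luxemburg norms -/

/-- The modular `∫ u(|f| / l) dμ` of a dilated function, as a function of the dilation `l`; the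
Luxemburg functional is the infimum of the `l > 0` at which it is at most one. -/
def dilatedModular {Ω : Type*} [MeasurableSpace Ω] (μ : Measure Ω) (u : ℝ → ℝ) (f : Ω → ℝ)
    (l : ℝ) : ℝ :=
  ∫ x, u (|f x| / l) ∂μ

section Luxemburg

variable {Ω S : Type*} [MeasurableSpace Ω] [MeasurableSpace S] {μ : Measure Ω} {ν : Measure S}
  {f : Ω → ℝ} {g : S → ℝ} {u v : ℝ → ℝ} {l M : ℝ}

lemma luxNorm_le_mul {c : ℝ} (hc : 0 < c) (h_nonempty : ∃ l, 0 < l ∧ dilatedModular ν v g l ≤ 1)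
    (h : ∀ l, 0 < l → dilatedModular ν v g l ≤ 1 → dilatedModular μ u f (c * l) ≤ 1) :
    luxNorm μ u f ≤ c * luxNorm ν v g := by
  rw [← div_le_iff₀' hc]
  refine le_csInf h_nonempty fun l ⟨hl, hv⟩ => ?_
  rw [div_le_iff₀' hc]
  exact csInf_le ⟨0, fun _ hr => hr.1.le⟩ ⟨mul_pos hc hl, h l hl hv⟩

section Modular

variable [IsProbabilityMeasure μ]

lemma integrable_comp_abs_div (hf : Measurable f) (hfM : ∀ x, |f x| ≤ M)
    (hu : MonotoneOn u (Set.Ici 0)) (hl : 0 < l) : Integrable (fun x => u (|f x| / l)) μ := by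
  have h_abs : ∀ x, |f x / l| = |f x| / l := fun x => by rw [abs_div, abs_of_pos hl]
  have := integrable_comp_abs (μ := μ) hu (hf.div_const l) (M := M / l) fun x => by
    rw [h_abs]
    exact div_le_div_of_nonneg_right (hfM x) hl.le
  simpa only [h_abs] using this

lemma dilatedModular_le (hf : Measurable f) (hfM : ∀ x, |f x| ≤ M)
    (hu : MonotoneOn u (Set.Ici 0)) (hv : MonotoneOn v (Set.Ici 0)) {l' : ℝ} (hl : 0 < l)
    (hl' : 0 < l') {α β : ℝ} (h : ∀ s, 0 ≤ s → u (s / l) ≤ α + β * v (s / l')) :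
    dilatedModular μ u f l ≤ α + β * dilatedModular μ v f l' := by
  have h_int := (integrable_comp_abs_div (μ := μ) hf hfM hv hl').const_mul β
  calc dilatedModular μ u f l ≤ ∫ x, (α + β * v (|f x| / l')) ∂μ :=
        integral_mono (integrable_comp_abs_div hf hfM hu hl) ((integrable_const α).add h_int)
          fun x => h |f x| (abs_nonneg _)
    _ = α + β * dilatedModular μ v f l' := by
        rw [integral_add (integrable_const α) h_int, integral_const_mul, integral_const,
          probReal_univ, one_smul, dilatedModular]

lemma exists_dilatedModular_le_one (hf : Measurable f) (hfM : ∀ x, |f x| ≤ M)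
    (hu : MonotoneOn u (Set.Ici 0)) (hu_one : ∃ s, 0 < s ∧ u s ≤ 1) :
    ∃ l, 0 < l ∧ dilatedModular μ u f l ≤ 1 := by
  obtain ⟨s, hs, hus⟩ := hu_one
  have hl : 0 < max M 1 / s := div_pos (by positivity) hs
  refine ⟨max M 1 / s, hl, ?_⟩
  calc dilatedModular μ u f (max M 1 / s) ≤ ∫ _, (1 : ℝ) ∂μ := by
        refine integral_mono (integrable_comp_abs_div hf hfM hu hl) (integrable_const 1)
          fun x => (hu (by positivity : 0 ≤ |f x| / (max M 1 / s)) hs.le ?_).trans hus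
        rw [div_le_iff₀ hl, mul_div_cancel₀ _ hs.ne']
        exact (hfM x).trans (le_max_left M 1)
    _ = 1 := by rw [integral_const, probReal_univ, one_smul]

lemma luxNorm_le_mul_of_apply_div_le {c : ℝ} (hf : Measurable f) (hfM : ∀ x, |f x| ≤ M)
    (hu : MonotoneOn u (Set.Ici 0)) (hv : MonotoneOn v (Set.Ici 0)) (hc : 0 < c)
    (hv_one : ∃ s, 0 < s ∧ v s ≤ 1) (h : ∀ t, 0 ≤ t → u (t / c) ≤ 1 / 2 + 1 / 2 * v t) :
    luxNorm μ u f ≤ c * luxNorm μ v f := by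
  refine luxNorm_le_mul hc (exists_dilatedModular_le_one hf hfM hv hv_one) fun l hl h_one => ?_
  have := dilatedModular_le (μ := μ) hf hfM hu hv (mul_pos hc hl) hl fun s hs => by
    rw [mul_comm c l, ← div_div]
    exact h (s / l) (by positivity)
  linarith

end Modular

namespace IsRegularPhi

variable {Ψ : ℝ → ℝ} {p A : ℝ} {q : ℕ}

lemma apply_two_mul_le (h : IsRegularPhi Ψ p A q) {t : ℝ} (ht : 0 ≤ t) :
    Ψ (2 * t) ≤ 2 ^ q * Ψ t := by
  rcases ht.eq_or_lt with rfl | ht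
  · simp only [mul_zero, h.map_zero, le_refl]
  have h_dec := h.mul_pow_le t (2 * t) ht (by linarith)
  rw [mul_pow, ← mul_assoc] at h_dec
  linarith [le_of_mul_le_mul_right h_dec (by positivity)]

lemma exists_apply_le_one (h : IsRegularPhi Ψ p A q) : ∃ s, 0 < s ∧ Ψ s ≤ 1 := by
  have hA := h.one_le_const
  have hc : 1 ≤ max 1 (Ψ 1) := le_max_left _ _
  exact ⟨1 / (A * max 1 (Ψ 1)), by positivity, (h.apply_div_le zero_le_one hc).trans
    ((div_le_one (by positivity)).2 (le_max_right _ _))⟩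

section Modular

variable [IsProbabilityMeasure μ]

lemma dilatedModular_mul_le (hΨ : IsRegularPhi Ψ p A q) (hf : Measurable f)
    (hfM : ∀ x, |f x| ≤ M) (hl : 0 < l) {c : ℝ} (hc : 1 ≤ c) :
    dilatedModular μ Ψ f (A * c * l) ≤ dilatedModular μ Ψ f l / c := by
  have hA := hΨ.one_le_const
  have := dilatedModular_le (μ := μ) (l := A * c * l) (α := 0) (β := c⁻¹) hf hfM hΨ.monotoneOn
    hΨ.monotoneOn (by positivity) hl fun s hs => by
      rw [mul_comm (A * c) l, ← div_div, zero_add, inv_mul_eq_div]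
      exact hΨ.apply_div_le (by positivity) hc
  rwa [zero_add, inv_mul_eq_div] at this

lemma dilatedModular_antitone (hΨ : IsRegularPhi Ψ p A q) (hf : Measurable f)
    (hfM : ∀ x, |f x| ≤ M) {l' : ℝ} (hl : 0 < l) (hll' : l ≤ l') :
    dilatedModular μ Ψ f l' ≤ dilatedModular μ Ψ f l := by
  have hl' : 0 < l' := hl.trans_le hll'
  refine integral_mono (integrable_comp_abs_div hf hfM hΨ.monotoneOn hl')
    (integrable_comp_abs_div hf hfM hΨ.monotoneOn hl) fun x => ?_
  exact hΨ.monotoneOn (Set.mem_Ici.2 (by positivity)) (Set.mem_Ici.2 (by positivity)) (by gcongr)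

lemma dilatedModular_le_two_pow_mul (hΨ : IsRegularPhi Ψ p A q) (hf : Measurable f)
    (hfM : ∀ x, |f x| ≤ M) (hl : 0 < l) :
    dilatedModular μ Ψ f l ≤ 2 ^ q * dilatedModular μ Ψ f (2 * l) := by
  have := dilatedModular_le (μ := μ) (l := l) (l' := 2 * l) (α := 0) (β := 2 ^ q) hf hfM
    hΨ.monotoneOn hΨ.monotoneOn hl (by positivity) fun s hs => by
      have h_eq : s / l = 2 * (s / (2 * l)) := by field_simp
      rw [h_eq, zero_add]
      exact hΨ.apply_two_mul_le (by positivity)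
  rwa [zero_add] at this

end Modular

/-- If the bound one already holds at `2 * l`, then closeness at `2 * l` improves it to `2⁻¹ ^ q`,
which doubling carries down to `l`. -/
lemma dilatedModular_le_one_of_two_pow_mul [IsProbabilityMeasure μ] [IsProbabilityMeasure ν]
    (hΨ : IsRegularPhi Ψ p A q) (hf : Measurable f) (hfM : ∀ x, |f x| ≤ M) (hg : Measurable g)
    (hgM : ∀ x, |g x| ≤ M)
    (h_close : ∀ l, 0 < l → dilatedModular μ Ψ f l ≤ 1 →
      |dilatedModular ν Ψ g l - dilatedModular μ Ψ f l| ≤ 1 / 2 ^ (q + 1)) (j : ℕ) (hl : 0 < l)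
    (h_sample : dilatedModular ν Ψ g l ≤ 1 / 2 ^ (q + 1))
    (h_one : dilatedModular μ Ψ f (2 ^ j * l) ≤ 1) : dilatedModular μ Ψ f l ≤ 1 := by
  induction j generalizing l with
  | zero => rwa [pow_zero, one_mul] at h_one
  | succ j ih =>
    have h_sample_two : dilatedModular ν Ψ g (2 * l) ≤ 1 / 2 ^ (q + 1) :=
      (hΨ.dilatedModular_antitone hg hgM hl (by linarith)).trans h_sample
    have h_one_two : dilatedModular μ Ψ f (2 * l) ≤ 1 :=
      ih (by positivity) h_sample_two (by rwa [← mul_assoc, ← pow_succ])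
    have h_lower := (abs_le.1 (h_close (2 * l) (by positivity) h_one_two)).1
    calc dilatedModular μ Ψ f l ≤ 2 ^ q * dilatedModular μ Ψ f (2 * l) :=
          hΨ.dilatedModular_le_two_pow_mul hf hfM hl
      _ ≤ 2 ^ q * (1 / 2 ^ (q + 1) + 1 / 2 ^ (q + 1)) := by gcongr; linarith
      _ = 1 := by rw [pow_succ]; field_simp; norm_num

lemma exists_dilatedModular_two_pow_mul_le_one [IsProbabilityMeasure μ]
    (hΨ : IsRegularPhi Ψ p A q) (hf : Measurable f) (hfM : ∀ x, |f x| ≤ M) (hl : 0 < l) :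
    ∃ j : ℕ, dilatedModular μ Ψ f (2 ^ j * l) ≤ 1 := by
  have hA := hΨ.one_le_const
  have hc : 1 ≤ max 1 (dilatedModular μ Ψ f l) := le_max_left _ _
  obtain ⟨j, hj⟩ := pow_unbounded_of_one_lt (A * max 1 (dilatedModular μ Ψ f l)) one_lt_two
  refine ⟨j, (hΨ.dilatedModular_antitone hf hfM (l := A * max 1 (dilatedModular μ Ψ f l) * l)
    (by positivity) (by gcongr)).trans ((hΨ.dilatedModular_mul_le hf hfM hl hc).trans ?_)⟩
  exact (div_le_one (by positivity)).2 (le_max_right _ _)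

theorem luxNorm_le_mul_of_close [IsProbabilityMeasure μ] [IsProbabilityMeasure ν]
    (hΨ : IsRegularPhi Ψ p A q) (hf : Measurable f) (hfM : ∀ x, |f x| ≤ M) (hg : Measurable g)
    (hgM : ∀ x, |g x| ≤ M)
    (h_close : ∀ l, 0 < l → dilatedModular μ Ψ f l ≤ 1 →
      |dilatedModular ν Ψ g l - dilatedModular μ Ψ f l| ≤ 1 / 2 ^ (q + 1)) :
    luxNorm μ Ψ f ≤ A * 2 ^ (q + 1) * luxNorm ν Ψ g ∧
      luxNorm ν Ψ g ≤ A * 2 ^ (q + 1) * luxNorm μ Ψ f := by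
  have hA := hΨ.one_le_const
  have h_pow : (2 : ℝ) ≤ 2 ^ (q + 1) := le_self_pow₀ one_le_two (Nat.succ_ne_zero q)
  have hc : (1 : ℝ) ≤ 2 ^ (q + 1) := one_le_two.trans h_pow
  have hC : 0 < A * 2 ^ (q + 1) := by positivity
  constructor
  · refine luxNorm_le_mul hC (exists_dilatedModular_le_one hg hgM hΨ.monotoneOn
      hΨ.exists_apply_le_one) fun l hl h_one => ?_
    have h_sample : dilatedModular ν Ψ g (A * 2 ^ (q + 1) * l) ≤ 1 / 2 ^ (q + 1) :=
      (hΨ.dilatedModular_mul_le hg hgM hl hc).trans (by gcongr)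
    obtain ⟨j, hj⟩ :=
      hΨ.exists_dilatedModular_two_pow_mul_le_one (μ := μ) hf hfM (mul_pos hC hl)
    exact hΨ.dilatedModular_le_one_of_two_pow_mul hf hfM hg hgM h_close j (mul_pos hC hl)
      h_sample hj
  · refine luxNorm_le_mul hC (exists_dilatedModular_le_one hf hfM hΨ.monotoneOn
      hΨ.exists_apply_le_one) fun l hl h_one => ?_
    have h_two : dilatedModular ν Ψ g l ≤ 2 := by
      have := (abs_le.1 (h_close l hl h_one)).2
      linarith [div_le_one_of_le₀ hc (by positivity)]
    exact (hΨ.dilatedModular_mul_le hg hgM hl hc).trans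
      ((div_le_one (by positivity)).2 (h_two.trans h_pow))

end IsRegularPhi

end Luxemburg

namespace IsRegularPhi

variable {Φ Ψ : ℝ → ℝ} {p A b T : ℝ} {q : ℕ}

lemma exists_apply_div_le_of_le_mul (hΨ : IsRegularPhi Ψ p A q)
    (hΦ_nonneg : ∀ t, 0 ≤ t → 0 ≤ Φ t) (hT : 0 ≤ T) (hb : 1 ≤ b)
    (hΨΦ : ∀ t, T ≤ t → Ψ t ≤ b * Φ t) :
    ∃ c, 0 < c ∧ ∀ t, 0 ≤ t → Ψ (t / c) ≤ 1 / 2 + 1 / 2 * Φ t := by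
  have hA := hΨ.one_le_const
  have hK : 1 ≤ max (Ψ T) b := hb.trans (le_max_right _ _)
  refine ⟨A * (2 * max (Ψ T) b), by positivity, fun t ht => ?_⟩
  refine (hΨ.apply_div_le ht (by linarith)).trans ((div_le_iff₀ (by positivity)).2 ?_)
  have hΦt := hΦ_nonneg t ht
  have h_low : Ψ T ≤ max (Ψ T) b := le_max_left _ _
  rcases le_total T t with hTt | htT
  · have h_high : b * Φ t ≤ max (Ψ T) b * Φ t := by gcongr; exact le_max_right _ _
    linarith [hΨΦ t hTt]
  · have : 0 ≤ max (Ψ T) b * Φ t := by positivity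
    linarith [hΨ.monotoneOn ht hT htT]

/-- A small dilation handles the arguments below a point `s` with `Φ s ≤ 1 / 2`; beyond it, `Φ` is
at most `Φ T` plus `Ψ`, both of which a further dilation makes small against `Ψ`. -/
lemma exists_apply_div_le_of_le (hΨ : IsRegularPhi Ψ p A q) (hΦ : IsPhiPrefun Φ) (hT : 0 ≤ T)
    (hΦΨ : ∀ t, T ≤ t → Φ t ≤ Ψ t) :
    ∃ c, 0 < c ∧ ∀ t, 0 ≤ t → Φ (t / c) ≤ 1 / 2 + 1 / 2 * Ψ t := by
  have hA := hΨ.one_le_const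
  obtain ⟨s, hΦs, hs⟩ : ∃ s, Φ s ≤ 1 / 2 ∧ 0 < s :=
    ((hΦ.tendsto_zero.eventually_le_const one_half_pos).and self_mem_nhdsWithin).exists
  obtain ⟨R, hR, hTR⟩ : ∃ R, 4 * Φ T ≤ Φ R ∧ T ≤ R :=
    ((hΦ.tendsto_atTop.eventually_ge_atTop _).and (Filter.eventually_ge_atTop T)).exists
  have hc : 4 ≤ max 4 (R / s) := le_max_left _ _
  have hc_pos : 0 < A * max 4 (R / s) := by positivity
  refine ⟨A * max 4 (R / s), hc_pos, fun t ht => ?_⟩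
  have hΨt := hΨ.nonneg t ht
  have h_arg : 0 ≤ t / (A * max 4 (R / s)) := div_nonneg ht hc_pos.le
  rcases le_total (t / (A * max 4 (R / s))) s with h_small | h_large
  · linarith [hΦ.mono h_arg hs.le h_small]
  have hRt : R ≤ t := by
    rw [le_div_iff₀ hc_pos] at h_large
    calc R = s * (R / s) := (mul_div_cancel₀ R hs.ne').symm
      _ ≤ s * max 4 (R / s) := by gcongr; exact le_max_right _ _
      _ ≤ s * (A * max 4 (R / s)) := by gcongr; exact le_mul_of_one_le_left (by positivity) hA
      _ ≤ t := h_large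
  have hΦT : 4 * Φ T ≤ Ψ t :=
    hR.trans ((hΦ.mono (hT.trans hTR) ht hRt).trans (hΦΨ t (hTR.trans hRt)))
  have hΨ_div : Ψ (t / (A * max 4 (R / s))) ≤ Ψ t / 4 :=
    (hΨ.apply_div_le ht (by linarith)).trans (by gcongr)
  rcases le_total T (t / (A * max 4 (R / s))) with hT_le | h_le_T
  · linarith [hΦΨ _ hT_le]
  · linarith [hΦ.mono h_arg hT h_le_T]

theorem exists_luxNorm_le_mul (hΨ : IsRegularPhi Ψ p A q) (hΦ : IsPhiPrefun Φ) (hT : 0 ≤ T)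
    (hb : 1 ≤ b) (hΦΨ : ∀ t, T ≤ t → Φ t ≤ Ψ t) (hΨΦ : ∀ t, T ≤ t → Ψ t ≤ b * Φ t) :
    ∃ C, 0 < C ∧ ∀ {Ω S : Type*} [MeasurableSpace Ω] [MeasurableSpace S] {μ : Measure Ω}
      {ν : Measure S} [IsProbabilityMeasure μ] [IsProbabilityMeasure ν] {f : Ω → ℝ} {g : S → ℝ}
      {M : ℝ}, Measurable f → (∀ x, |f x| ≤ M) → Measurable g → (∀ x, |g x| ≤ M) →
      (∀ l, 0 < l → dilatedModular μ Ψ f l ≤ 1 →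
        |dilatedModular ν Ψ g l - dilatedModular μ Ψ f l| ≤ 1 / 2 ^ (q + 1)) →
      luxNorm μ Φ f ≤ C * luxNorm ν Φ g ∧ luxNorm ν Φ g ≤ C * luxNorm μ Φ f := by
  have hA := hΨ.one_le_const
  obtain ⟨c, hc, hΨ_le⟩ := hΨ.exists_apply_div_le_of_le_mul hΦ.nonneg hT hb hΨΦ
  obtain ⟨d, hd, hΦ_le⟩ := hΨ.exists_apply_div_le_of_le hΦ hT hΦΨ
  have hΦ_one : ∃ s, 0 < s ∧ Φ s ≤ 1 :=
    ((Filter.eventually_mem_set.2 self_mem_nhdsWithin).and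
      (hΦ.tendsto_zero.eventually_le_const zero_lt_one)).exists
  refine ⟨d * (A * 2 ^ (q + 1) * c), by positivity, ?_⟩
  intro Ω S _ _ μ ν _ _ f g M hf hfM hg hgM h_close
  have h_trans : ∀ {x y z w : ℝ}, x ≤ d * y → y ≤ A * 2 ^ (q + 1) * z → z ≤ c * w →
      x ≤ d * (A * 2 ^ (q + 1) * c) * w := fun {x y z w} hxy hyz hzw =>
    calc x ≤ d * y := hxy
      _ ≤ d * (A * 2 ^ (q + 1) * z) := by gcongr
      _ ≤ d * (A * 2 ^ (q + 1) * (c * w)) := by gcongr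
      _ = d * (A * 2 ^ (q + 1) * c) * w := by ring
  obtain ⟨hμν, hνμ⟩ := hΨ.luxNorm_le_mul_of_close hf hfM hg hgM h_close
  exact ⟨h_trans
      (luxNorm_le_mul_of_apply_div_le hf hfM hΦ.mono hΨ.monotoneOn hd hΨ.exists_apply_le_one hΦ_le)
      hμν (luxNorm_le_mul_of_apply_div_le hg hgM hΨ.monotoneOn hΦ.mono hc hΦ_one hΨ_le),
    h_trans
      (luxNorm_le_mul_of_apply_div_le hg hgM hΦ.mono hΨ.monotoneOn hd hΨ.exists_apply_le_one hΦ_le)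
      hνμ (luxNorm_le_mul_of_apply_div_le hf hfM hΨ.monotoneOn hΦ.mono hc hΦ_one hΨ_le)⟩

end IsRegularPhi

/-! ## Function spaces -/

/-- The uniform probability measure on the indices of a sample of size `m`. -/
def indexMeasure (m : ℕ) [NeZero m] : Measure (Fin m) := (PMF.uniformOfFintype (Fin m)).toMeasure

instance (m : ℕ) [NeZero m] : IsProbabilityMeasure (indexMeasure m) :=
  PMF.toMeasure.isProbabilityMeasure _

lemma integral_indexMeasure (m : ℕ) [NeZero m] (F : Fin m → ℝ) :
    ∫ j, F j ∂indexMeasure m = (∑ j, F j) / m := by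
  simp only [indexMeasure, PMF.integral_eq_sum, PMF.uniformOfFintype_apply, Fintype.card_fin,
    ENNReal.toReal_inv, ENNReal.toReal_natCast, smul_eq_mul, inv_mul_eq_div, ← Finset.sum_div]

lemma luxNorm_indexMeasure {Ω : Type*} (Φ : ℝ → ℝ) {m : ℕ} [NeZero m] (x : Fin m → Ω)
    (f : Ω → ℝ) : luxNorm (indexMeasure m) Φ (f ∘ x) = discLuxNorm Φ x f := by
  simp only [luxNorm, discLuxNorm, integral_indexMeasure, Function.comp_apply]

variable {Ω : Type*} [MeasurableSpace Ω] {μ : Measure Ω} {H : ℝ}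

/-- By Riesz representation: `κ x` represents the evaluation at `x`, and the pointwise bound for the
function of `κ x` itself bounds its norm. -/
lemma exists_isBoundedParsevalFrame_of_isometry {F : Type*} [NormedAddCommGroup F]
    [InnerProductSpace ℝ F] [FiniteDimensional ℝ F] (φ : F →ₗ[ℝ] Ω → ℝ)
    (hφ : ∀ v, Measurable (φ v)) (h_norm : ∀ v, ∫ x, φ v x ^ 2 ∂μ = ‖v‖ ^ 2) (hH : 0 ≤ H)
    (h_le : ∀ v x, |φ v x| ≤ H * ‖v‖) :
    ∃ κ : Ω → F, IsBoundedParsevalFrame μ κ H ∧ ∀ v x, ⟪κ x, v⟫ = φ v x := by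
  let eval (x : Ω) : F →ₗ[ℝ] ℝ := LinearMap.proj x ∘ₗ φ
  let κ (x : Ω) : F := (InnerProductSpace.toDual ℝ F).symm (eval x).toContinuousLinearMap
  have h_inner : ∀ v x, ⟪κ x, v⟫ = φ v x := fun v x => InnerProductSpace.toDual_symm_apply
  refine ⟨κ, ⟨fun x => ?_, fun v => ?_, fun v => ?_⟩, h_inner⟩
  · have h_self := (le_abs_self _).trans (h_le (κ x) x)
    rw [← h_inner, real_inner_self_eq_norm_mul_norm] at h_self
    rcases (norm_nonneg (κ x)).eq_or_lt with h_zero | h_pos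
    · rwa [← h_zero]
    · exact le_of_mul_le_mul_right h_self h_pos
  · simpa only [h_inner] using hφ v
  · simpa only [h_inner] using h_norm v

/-- The members of `X` are measurable and satisfy the Nikol'skii inequality
`‖f‖_∞ ≤ H ‖f‖_{L²(μ)}`, the supremum being taken pointwise. -/
structure IsNikolskiiSpace (μ : Measure Ω) (X : Submodule ℝ (Ω → ℝ)) (H : ℝ) : Prop where
  measurable : ∀ f ∈ X, Measurable f
  abs_le : ∀ f ∈ X, ∀ x, |f x| ≤ H * √(∫ y, f y ^ 2 ∂μ)

namespace IsNikolskiiSpace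

variable {X : Submodule ℝ (Ω → ℝ)}

lemma of_supNorm_le [TopologicalSpace Ω] [CompactSpace Ω] [OpensMeasurableSpace Ω]
    (hX : ∀ f ∈ X, Continuous f) (h_le : ∀ f ∈ X, supNorm f ≤ H * √(∫ y, f y ^ 2 ∂μ)) :
    IsNikolskiiSpace μ X H where
  measurable f hf := (hX f hf).measurable
  abs_le f hf x :=
    (le_ciSup (isCompact_range (hX f hf).abs).bddAbove x).trans (h_le f hf)

lemma integrable_mul [IsFiniteMeasure μ] (hX : IsNikolskiiSpace μ X H) {f g : Ω → ℝ} (hf : f ∈ X)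
    (hg : g ∈ X) : Integrable (fun x => f x * g x) μ := by
  refine .of_bound ((hX.measurable f hf).mul (hX.measurable g hg)).aestronglyMeasurable
    (H * √(∫ y, f y ^ 2 ∂μ) * (H * √(∫ y, g y ^ 2 ∂μ))) (.of_forall fun x => ?_)
  rw [Real.norm_eq_abs, abs_mul]
  exact mul_le_mul (hX.abs_le f hf x) (hX.abs_le g hg x) (abs_nonneg _)
    ((abs_nonneg _).trans (hX.abs_le f hf x))

/-- The inner product of `L²(μ)` on a space satisfying the Nikol'skii inequality, which makes it
definite on functions rather than on classes of functions. -/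
@[reducible]
def innerProductCore [IsFiniteMeasure μ] (hX : IsNikolskiiSpace μ X H) :
    InnerProductSpace.Core ℝ X where
  inner f g := ∫ x, (f : Ω → ℝ) x * (g : Ω → ℝ) x ∂μ
  conj_inner_symm f g := by
    simp only [conj_trivial, mul_comm]
  re_inner_nonneg f := integral_nonneg fun x => mul_self_nonneg _
  add_left f g h := by
    rw [← integral_add (hX.integrable_mul f.2 h.2) (hX.integrable_mul g.2 h.2)]
    simp only [Submodule.coe_add, Pi.add_apply, add_mul]
  smul_left f g r := by
    rw [conj_trivial, ← integral_const_mul]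
    simp only [Submodule.coe_smul, Pi.smul_apply, smul_eq_mul, mul_assoc]
  definite f h := by
    ext x
    have h_abs := hX.abs_le f f.2 x
    simp only [pow_two, h, Real.sqrt_zero, mul_zero] at h_abs
    exact abs_nonpos_iff.1 h_abs

theorem exists_isBoundedParsevalFrame [IsFiniteMeasure μ] [FiniteDimensional ℝ X] (hH : 0 ≤ H)
    (hX : IsNikolskiiSpace μ X H) :
    ∃ κ : Ω → EuclideanSpace ℝ (Fin (Module.finrank ℝ X)),
      IsBoundedParsevalFrame μ κ H ∧ ∀ f ∈ X, ∃ v, ∀ x, ⟪κ x, v⟫ = f x := by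
  let : NormedAddCommGroup X := hX.innerProductCore.toNormedAddCommGroup
  let : InnerProductSpace ℝ X := InnerProductSpace.ofCore hX.innerProductCore.toCore
  let e := (stdOrthonormalBasis ℝ X).repr
  have h_norm : ∀ v, ∫ x, (e.symm v : Ω → ℝ) x ^ 2 ∂μ = ‖v‖ ^ 2 := fun v => by
    simp only [pow_two]
    rw [← e.symm.norm_map v, ← real_inner_self_eq_norm_mul_norm]
    rfl
  obtain ⟨κ, hκ, h_inner⟩ := exists_isBoundedParsevalFrame_of_isometry
    (X.subtype ∘ₗ e.symm.toLinearEquiv.toLinearMap) (fun v => hX.measurable _ (e.symm v).2) h_norm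
    hH fun v x => by
      rw [← Real.sqrt_sq (norm_nonneg v), ← h_norm]
      exact hX.abs_le _ (e.symm v).2 x
  refine ⟨κ, hκ, fun f hf => ⟨e ⟨f, hf⟩, fun x => ?_⟩⟩
  rw [h_inner]
  exact congrArg (fun g : X => (g : Ω → ℝ) x) (e.symm_apply_apply ⟨f, hf⟩)

end IsNikolskiiSpace

/-! ## Discretization of Luxemburg norms -/

lemma AIncPOn.mul_rpow_le {Φ : ℝ → ℝ} {p r a s₀ T s t : ℝ} (h : AIncPOn Φ p a s₀)
    (hΦ : ∀ t, 0 ≤ t → 0 ≤ Φ t) (ha : 1 ≤ a) (hrp : r ≤ p) (hT : 0 < T) (hs₀ : s₀ < T)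
    (hTs : T ≤ s) (hst : s ≤ t) : Φ s * t ^ r ≤ a * Φ t * s ^ r := by
  have hs : 0 < s := hT.trans_le hTs
  have ht : 0 < t := hs.trans_le hst
  have hΦt := hΦ t ht.le
  rcases hst.eq_or_lt with rfl | hlt
  · gcongr
    exact le_mul_of_one_le_left hΦt ha
  have h_inc := h s t (hs₀.trans_le hTs) hlt
  rw [← mul_div_assoc, div_le_div_iff₀ (by positivity) (by positivity)] at h_inc
  have h_split : ∀ {y : ℝ}, 0 < y → y ^ p = y ^ r * y ^ (p - r) := fun hy => by
    rw [← Real.rpow_add hy, add_sub_cancel]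
  have h_mono : s ^ (p - r) ≤ t ^ (p - r) := Real.rpow_le_rpow hs.le hst (sub_nonneg.2 hrp)
  refine le_of_mul_le_mul_right ?_ (Real.rpow_pos_of_pos ht (p - r))
  calc Φ s * t ^ r * t ^ (p - r) = Φ s * t ^ p := by rw [h_split ht, mul_assoc]
    _ ≤ a * Φ t * s ^ p := h_inc
    _ = a * Φ t * s ^ r * s ^ (p - r) := by rw [h_split hs]; ring
    _ ≤ a * Φ t * s ^ r * t ^ (p - r) := by gcongr

lemma ADecQOn.mul_pow_le {Φ : ℝ → ℝ} {r b s₀ T s t : ℝ} {q : ℕ} (h : ADecQOn Φ r b s₀)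
    (hΦ : ∀ t, 0 ≤ t → 0 ≤ Φ t) (hb : 1 ≤ b) (hrq : r ≤ q) (hT : 0 < T) (hs₀ : s₀ < T)
    (hTs : T ≤ s) (hst : s ≤ t) : Φ t * s ^ q ≤ b * Φ s * t ^ q := by
  have hs : 0 < s := hT.trans_le hTs
  have ht : 0 < t := hs.trans_le hst
  have hΦs := hΦ s hs.le
  rcases hst.eq_or_lt with rfl | hlt
  · gcongr
    exact le_mul_of_one_le_left hΦs hb
  have h_dec := h s t (hs₀.trans_le hTs) hlt
  rw [← mul_div_assoc, div_le_div_iff₀ (by positivity) (by positivity)] at h_dec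
  have h_split : ∀ {y : ℝ}, 0 < y → y ^ q = y ^ r * y ^ (q - r) := fun hy => by
    rw [← Real.rpow_add hy, add_sub_cancel, Real.rpow_natCast]
  have h_mono : s ^ (q - r) ≤ t ^ (q - r) := Real.rpow_le_rpow hs.le hst (sub_nonneg.2 hrq)
  calc Φ t * s ^ q = Φ t * s ^ r * s ^ (q - r) := by rw [h_split hs, mul_assoc]
    _ ≤ b * Φ s * t ^ r * s ^ (q - r) := by gcongr
    _ ≤ b * Φ s * t ^ r * t ^ (q - r) := by gcongr
    _ = b * Φ s * t ^ q := by rw [h_split ht, mul_assoc]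

/-- `Ψ` agrees with `Φ` up to the factor `b` on `[T, ∞)`. -/
structure IsEquivAbove (Φ Ψ : ℝ → ℝ) (b T : ℝ) : Prop where
  self_le : ∀ t, T ≤ t → Φ t ≤ Ψ t
  le_mul : ∀ t, T ≤ t → Ψ t ≤ b * Φ t
  threshold_pos : 0 < T
  apply_threshold_pos : 0 < Φ T
  one_le_const : 1 ≤ b

theorem IsPhiPrefun.exists_isRegularPhi {Φ : ℝ → ℝ} (hΦ : IsPhiPrefun Φ) {p : ℝ} (hp : 1 < p)
    (hinc : ∃ s₀ a, 1 ≤ a ∧ AIncPOn Φ p a s₀) (hdec : ∃ r s₀ b, 1 ≤ b ∧ ADecQOn Φ r b s₀) :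
    ∃ Ψ A q b T, IsRegularPhi Ψ (min p 2) A q ∧ IsEquivAbove Φ Ψ b T := by
  obtain ⟨s₁, a, ha, hinc⟩ := hinc
  obtain ⟨r, s₂, b, hb, hdec⟩ := hdec
  obtain ⟨T, ⟨hT, hΦT⟩, hs₁, hs₂⟩ : ∃ T, (0 < T ∧ 0 < Φ T) ∧ s₁ < T ∧ s₂ < T :=
    (((Filter.eventually_gt_atTop 0).and (hΦ.tendsto_atTop.eventually_gt_atTop 0)).and
      ((Filter.eventually_gt_atTop s₁).and (Filter.eventually_gt_atTop s₂))).exists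
  have hrq : r ≤ (max 2 ⌈r⌉₊ : ℕ) := (Nat.le_ceil r).trans (Nat.cast_le.2 (le_max_right _ _))
  have h_growth : HasPowGrowthAbove Φ b T (max 2 ⌈r⌉₊) :=
    ⟨hΦ.nonneg, hΦ.mono, fun s t => hdec.mul_pow_le hΦ.nonneg hb hrq hT hs₂, hT, hb⟩
  exact ⟨phiEnvelope Φ T (max 2 ⌈r⌉₊), a * b, max 2 ⌈r⌉₊, b, T,
    h_growth.isRegularPhi_phiEnvelope (lt_min hp one_lt_two) (min_le_right p 2) (le_max_left _ _)
      ha hΦT fun s t => hinc.mul_rpow_le hΦ.nonneg ha (min_le_left p 2) hT hs₁,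
    ⟨fun _ => h_growth.self_le_phiEnvelope, fun _ => h_growth.phiEnvelope_le, hT, hΦT, hb⟩⟩

section

variable {Φ Ψ : ℝ → ℝ} {p A b T : ℝ} {q : ℕ}

lemma IsRegularPhi.amplitude_eq (hΨ : IsRegularPhi Ψ p A q) {H : ℝ} (hH : 0 ≤ H) :
    amplitude Ψ p A H = growthConst Ψ A ^ p⁻¹ * H ^ (2 / p) := by
  have := hΨ.one_lt_growthConst
  rw [amplitude, Real.mul_rpow (by linarith) (sq_nonneg H), ← Real.rpow_natCast,
    ← Real.rpow_mul hH, Nat.cast_two, div_eq_mul_inv]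

lemma IsRegularPhi.exists_apply_amplitude_le (hΨ : IsRegularPhi Ψ p A q)
    (hΦ : MonotoneOn Φ (Set.Ici 0)) (hΦΨ : IsEquivAbove Φ Ψ b T) :
    ∃ c, 0 < c ∧ ∀ H, 1 ≤ H →
      0 < Φ (c * H ^ (2 / p)) ∧ Ψ (amplitude Ψ p A H) ≤ b * Φ (c * H ^ (2 / p)) := by
  have hT := hΦΨ.threshold_pos
  have hc : 0 < max (growthConst Ψ A ^ p⁻¹) T := hT.trans_le (le_max_right _ _)
  refine ⟨max (growthConst Ψ A ^ p⁻¹) T, hc, fun H hH => ?_⟩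
  have hp : 0 ≤ 2 / p := div_nonneg zero_le_two (by linarith [hΨ.one_lt])
  have h_arg : T ≤ max (growthConst Ψ A ^ p⁻¹) T * H ^ (2 / p) :=
    (le_max_right _ _).trans (le_mul_of_one_le_right hc.le (Real.one_le_rpow hH hp))
  have h_arg_nonneg : 0 ≤ max (growthConst Ψ A ^ p⁻¹) T * H ^ (2 / p) := hT.le.trans h_arg
  have h_amplitude : amplitude Ψ p A H ≤ max (growthConst Ψ A ^ p⁻¹) T * H ^ (2 / p) := by
    rw [hΨ.amplitude_eq (zero_le_one.trans hH)]
    gcongr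
    exact le_max_left _ _
  exact ⟨hΦΨ.apply_threshold_pos.trans_le (hΦ hT.le h_arg_nonneg h_arg),
    (hΨ.monotoneOn (hΨ.amplitude_pos (zero_lt_one.trans_le hH)).le h_arg_nonneg
      h_amplitude).trans (hΦΨ.le_mul _ h_arg)⟩

variable {Ω E : Type*} [MeasurableSpace Ω] [NormedAddCommGroup E] [InnerProductSpace ℝ E]

lemma IsApproxSample.abs_dilatedModular_sub_le {μ : Measure Ω} {κ : Ω → E} {m : ℕ} [NeZero m]
    {x : Fin m → Ω} {τ : ℝ} (hx : IsApproxSample μ κ Ψ x τ) {f : Ω → ℝ} {v : E}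
    (hv : ∀ y, ⟪κ y, v⟫ = f y) {l : ℝ} (hl : 0 < l) (h_one : dilatedModular μ Ψ f l ≤ 1) :
    |dilatedModular (indexMeasure m) Ψ (f ∘ x) l - dilatedModular μ Ψ f l| ≤ τ := by
  have h_abs : ∀ y, |⟪κ y, l⁻¹ • v⟫| = |f y| / l := fun y => by
    rw [real_inner_smul_right, hv, abs_mul, abs_of_pos (inv_pos.2 hl), inv_mul_eq_div]
  have h_modular : modular μ κ Ψ (l⁻¹ • v) = dilatedModular μ Ψ f l := by
    simp only [modular, dilatedModular, h_abs]
  have h_sample : sampleModular κ Ψ x (l⁻¹ • v) =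
      dilatedModular (indexMeasure m) Ψ (f ∘ x) l := by
    simp only [sampleModular, dilatedModular, integral_indexMeasure, h_abs, Fintype.card_fin,
      Function.comp_apply]
  rw [← h_modular, ← h_sample]
  exact hx _ (h_modular ▸ h_one)

theorem IsRegularPhi.exists_discLuxNorm_equiv (hΨ : IsRegularPhi Ψ p A q) (hΦ : IsPhiPrefun Φ)
    (hΦΨ : IsEquivAbove Φ Ψ b T) :
    ∃ C D, 0 < C ∧ 0 < D ∧ ∀ {Ω : Type*} [MeasurableSpace Ω] (μ : Measure Ω)
      [IsProbabilityMeasure μ] (H : ℝ), 1 ≤ H → ∀ X : Submodule ℝ (Ω → ℝ),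
      IsNikolskiiSpace μ X H → 1 ≤ Module.finrank ℝ X → ∀ m : ℕ, 1 ≤ m →
      C * Ψ (amplitude Ψ p A H) * Real.logb 2 (2 * Module.finrank ℝ X) ^ 2 *
        Real.logb 2 (2 * H ^ 2) ≤ m →
      ∃ x : Fin m → Ω, ∀ f ∈ X, luxNorm μ Φ f ≤ D * discLuxNorm Φ x f ∧
        discLuxNorm Φ x f ≤ D * luxNorm μ Φ f := by
  have h_half : (1 : ℝ) / 2 ^ (q + 1) ≤ 1 / 2 :=
    one_div_le_one_div_of_le two_pos (le_self_pow₀ one_le_two (Nat.succ_ne_zero q))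
  obtain ⟨C, hC, h_sample⟩ := hΨ.exists_isApproxSample (by positivity) h_half
  obtain ⟨D, hD, h_lux⟩ := hΨ.exists_luxNorm_le_mul hΦ hΦΨ.threshold_pos.le hΦΨ.one_le_const
    hΦΨ.self_le hΦΨ.le_mul
  refine ⟨C, D, hC, hD, fun {Ω} _ μ _ H hH X hX hN m hm hmC => ?_⟩
  have : FiniteDimensional ℝ X := Module.finite_of_finrank_pos hN
  have : NeZero m := NeZero.of_pos hm
  obtain ⟨κ, hκ, h_rep⟩ := hX.exists_isBoundedParsevalFrame (zero_le_one.trans hH)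
  rw [← finrank_euclideanSpace_fin (𝕜 := ℝ) (n := Module.finrank ℝ X)] at hN hmC
  obtain ⟨x, hx⟩ := h_sample hκ hH hN hm hmC
  refine ⟨x, fun f hf => ?_⟩
  obtain ⟨v, hv⟩ := h_rep f hf
  rw [← luxNorm_indexMeasure Φ x f]
  exact h_lux (hX.measurable f hf) (hX.abs_le f hf) measurable_from_top
    (fun j => hX.abs_le f hf (x j)) fun l hl => hx.abs_dilatedModular_sub_le hv hl

end

theorem statement11_general {p : ℝ} (hp : 1 < p) {Φ : ℝ → ℝ} (hΦ : IsPhiPrefun Φ)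
    (hinc : ∃ s₀ a, 1 ≤ a ∧ AIncPOn Φ p a s₀) (hdec : ∃ r s₀ b, 1 ≤ b ∧ ADecQOn Φ r b s₀) :
    ∃ c C C₁ C₂ : ℝ, 0 < c ∧ 0 < C ∧ 0 < C₁ ∧ 0 < C₂ ∧
      ∀ {Ω : Type*} [MeasurableSpace Ω] (μ : Measure Ω) [IsProbabilityMeasure μ] (H : ℝ), 1 ≤ H →
      ∀ X : Submodule ℝ (Ω → ℝ), IsNikolskiiSpace μ X H → 1 ≤ Module.finrank ℝ X → ∀ m : ℕ,
      C * Φ (c * H ^ (2 / min p 2)) * Real.logb 2 (2 * Module.finrank ℝ X) ^ 2 *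
        Real.logb 2 (2 * H ^ 2) ≤ m →
      ∃ x : Fin m → Ω, ∀ f ∈ X, C₁ * luxNorm μ Φ f ≤ discLuxNorm Φ x f ∧
        discLuxNorm Φ x f ≤ C₂ * luxNorm μ Φ f := by
  obtain ⟨Ψ, A, q, b, T, hΨ, hΦΨ⟩ := hΦ.exists_isRegularPhi hp hinc hdec
  obtain ⟨c, hc, h_amplitude⟩ := hΨ.exists_apply_amplitude_le hΦ.mono hΦΨ
  obtain ⟨C, D, hC, hD, h_equiv⟩ := hΨ.exists_discLuxNorm_equiv hΦ hΦΨ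
  have hb := hΦΨ.one_le_const
  refine ⟨c, C * b, D⁻¹, D, hc, by positivity, by positivity, hD, ?_⟩
  intro Ω _ μ _ H hH X hX hN m hm
  obtain ⟨hΦ_pos, hΨ_le⟩ := h_amplitude H hH
  have h_logN : 1 ≤ Real.logb 2 (2 * Module.finrank ℝ X) :=
    one_le_logb_two_mul (Nat.one_le_cast.2 hN)
  have h_logH : 1 ≤ Real.logb 2 (2 * H ^ 2) := one_le_logb_two_mul (one_le_pow₀ hH)
  have hm_pos : (0 : ℝ) < m := lt_of_lt_of_le (by positivity) hm
  have hm_Ψ : C * Ψ (amplitude Ψ (min p 2) A H) * Real.logb 2 (2 * Module.finrank ℝ X) ^ 2 *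
      Real.logb 2 (2 * H ^ 2) ≤ m := by
    refine le_trans ?_ hm
    rw [mul_assoc C b]
    gcongr
  obtain ⟨x, hx⟩ := h_equiv μ H hH X hX hN m (by exact_mod_cast hm_pos) hm_Ψ
  exact ⟨x, fun f hf => ⟨(inv_mul_le_iff₀ hD).2 (hx f hf).1, (hx f hf).2⟩⟩

end

/-- Theorem cor4.2. Let `p ∈ (1,∞)`. For every Φ-function `Φ` with
`Φ ∈ (aInc)_p(∞) ∩ (aDec)(∞)` there exist positive constants `c, C, C₁, C₂` (depending only
on `Φ` and `p`) such that for every `N`-dimensional subspace `X_N ∈ NI_{2,∞}(H)` and every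
`m ≥ C Φ(c H^{2/min{p,2}}) (log₂ 2N)² log₂ 2H²`, there are points `x₁,…,x_m ∈ Ω` with
`C₁ ‖f‖_Φ ≤ ‖f‖_{Φ,x} ≤ C₂ ‖f‖_Φ` for all `f ∈ X_N`. -/
theorem statement11 (p : ℝ) (hp : 1 < p)
    (Φ : ℝ → ℝ) (hpre : IsPhiPrefun Φ) (hphiw : ∃ a : ℝ, 1 ≤ a ∧ AIncP Φ 1 a)
    (hainc : ∃ tstar a : ℝ, 0 ≤ tstar ∧ 1 ≤ a ∧ AIncPOn Φ p a tstar)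
    (hadec : ∃ q tstar b : ℝ, 1 ≤ q ∧ 0 ≤ tstar ∧ 1 ≤ b ∧ ADecQOn Φ q b tstar) :
    ∃ c C C₁ C₂ : ℝ, 0 < c ∧ 0 < C ∧ 0 < C₁ ∧ 0 < C₂ ∧
      ∀ (Ω : Type) [MetricSpace Ω] [CompactSpace Ω] [MeasurableSpace Ω] [BorelSpace Ω],
      ∀ (μ : Measure Ω), IsProbabilityMeasure μ →
      ∀ N : ℕ, 1 ≤ N → ∀ H : ℝ, 1 ≤ H →
      ∀ X : Submodule ℝ (Ω → ℝ),
        (∀ f ∈ X, Continuous f) →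
        Module.finrank ℝ X = N →
        (∀ f ∈ X, supNorm f ≤ H * Real.sqrt (∫ y, (f y) ^ 2 ∂μ)) →
      ∀ m : ℕ,
        C * Φ (c * H ^ (2 / min p 2)) * (Real.logb 2 (2 * N)) ^ 2 *
            Real.logb 2 (2 * H ^ 2) ≤ (m : ℝ) →
        ∃ x : Fin m → Ω, ∀ f ∈ X,
          C₁ * luxNorm μ Φ f ≤ discLuxNorm Φ x f ∧
          discLuxNorm Φ x f ≤ C₂ * luxNorm μ Φ f := by
  obtain ⟨t₁, a, -, ha, hinc⟩ := hainc
  obtain ⟨q, t₂, b, -, -, hb, hdec⟩ := hadec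
  obtain ⟨c, C, C₁, C₂, hc, hC, hC₁, hC₂, h⟩ :=
    statement11_general hp hpre ⟨t₁, a, ha, hinc⟩ ⟨q, t₂, b, hb, hdec⟩
  refine ⟨c, C, C₁, C₂, hc, hC, hC₁, hC₂, ?_⟩
  rintro Ω _ _ _ _ μ _ _ hN H hH X hX_cont rfl hX m hm
  exact h μ H hH X (.of_supNorm_le hX_cont hX) hN m hm
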